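/- arXiv:1306.5446 — 2 statements merged into one kernel-verified Lean document; each statement's English description precedes it below -/
import Mathlib

section
/- Let d ∈ ℕ and let O be either ℝᵈ or an open ball in ℝᵈ. Let m : ℝᵈ → [0,∞) be a measurable function such that m ∈ W^{1,1}_loc(ℝᵈ) and √m ∈ W^{1,2}(O). Then the weighted Sobolev space W^{1,2}(O, m(x)dx) coincides with the closure H^{1,2}(O, m(x)dx) of smooth functions: for every f ∈ W^{1,1}_loc(O) with ∫_O f(x)² m(x) dx < ∞ and ∫_O |Df(x)|² m(x) dx < ∞ there exists a sequence ψ_i ∈ C^∞(O) such that ∫_O (f(x) − ψ_i(x))² m(x) dx + ∫_O |Df(x) − Dψ_i(x)|² m(x) dx → 0 as i → ∞. -/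
open MeasureTheory Filter Set Topology RealInnerProductSpace

variable {d : ℕ}

/-- `g` is the weak (Sobolev) gradient of `f` on `ℝᵈ`; in particular `f ∈ W^{1,1}_loc`. -/
def HasWeakGrad (f : EuclideanSpace ℝ (Fin d) → ℝ)
    (g : EuclideanSpace ℝ (Fin d) → EuclideanSpace ℝ (Fin d)) : Prop :=
  LocallyIntegrable f volume ∧ LocallyIntegrable g volume ∧
    ∀ p : EuclideanSpace ℝ (Fin d) → ℝ, ContDiff ℝ (⊤ : ℕ∞) p → HasCompactSupport p →
      ∀ v : EuclideanSpace ℝ (Fin d),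
        (∫ x, f x * fderiv ℝ p x v) = - ∫ x, ⟪g x, v⟫ * p x

/-- `g` is the weak (Sobolev) gradient of `f` on the open set `O ⊆ ℝᵈ`. -/
def HasWeakGradOn (O : Set (EuclideanSpace ℝ (Fin d)))
    (f : EuclideanSpace ℝ (Fin d) → ℝ)
    (g : EuclideanSpace ℝ (Fin d) → EuclideanSpace ℝ (Fin d)) : Prop :=
  LocallyIntegrableOn f O volume ∧ LocallyIntegrableOn g O volume ∧
    ∀ p : EuclideanSpace ℝ (Fin d) → ℝ, ContDiff ℝ (⊤ : ℕ∞) p → HasCompactSupport p →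
      tsupport p ⊆ O →
      ∀ v : EuclideanSpace ℝ (Fin d),
        (∫ x in O, f x * fderiv ℝ p x v) = - ∫ x in O, ⟪g x, v⟫ * p x

open scoped ENNReal ContDiff

/-- Euclidean space of dimension `d`. -/
abbrev Euc (d : ℕ) := EuclideanSpace ℝ (Fin d)

/-- A smooth bump function supported in the unit ball. -/
noncomputable def unitBump (d : ℕ) : ContDiffBump (0 : Euc d) :=
  ⟨1 / 2, 1, by norm_num, by norm_num⟩

/-- The standard mollifier at scale `ε`. -/
noncomputable def moll (ε : ℝ) (z : Euc d) : ℝ :=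
  (ε⁻¹) ^ d * (unitBump d).normed volume (ε⁻¹ • z)

theorem contDiff_moll (ε : ℝ) : ContDiff ℝ ∞ (moll (d := d) ε) :=
  contDiff_const.mul ((unitBump d).contDiff_normed.comp (contDiff_const_smul _))

theorem moll_nonneg {ε : ℝ} (hε : 0 < ε) (z : Euc d) : 0 ≤ moll ε z :=
  mul_nonneg (by positivity) ((unitBump d).nonneg_normed _)

theorem moll_eq_zero {ε : ℝ} (hε : 0 < ε) {z : Euc d} (hz : z ∉ Metric.closedBall 0 ε) :
    moll ε z = 0 := by
  have : ε⁻¹ • z ∉ Function.support ((unitBump d).normed volume) := by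
    rw [ContDiffBump.support_normed_eq]
    simp only [Metric.mem_closedBall, dist_zero_right, not_le, Metric.mem_ball, not_lt] at hz ⊢
    rw [norm_smul, norm_inv, Real.norm_of_nonneg hε.le]
    change 1 ≤ _
    rw [inv_mul_eq_div, le_div_iff₀ hε]
    linarith
  rw [moll, Function.notMem_support.1 this, mul_zero]

theorem tsupport_moll_subset {ε : ℝ} (hε : 0 < ε) :
    tsupport (moll (d := d) ε) ⊆ Metric.closedBall 0 ε :=
  closure_minimal (fun _ hz => by_contra fun h => hz (moll_eq_zero hε h)) Metric.isClosed_closedBall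

theorem hasCompactSupport_moll {ε : ℝ} (hε : 0 < ε) : HasCompactSupport (moll (d := d) ε) :=
  HasCompactSupport.of_support_subset_isCompact (isCompact_closedBall (0 : Euc d) ε)
    ((subset_tsupport _).trans (tsupport_moll_subset hε))

theorem integral_moll {ε : ℝ} (hε : 0 < ε) : ∫ z : Euc d, moll ε z = 1 := by
  simp only [moll]
  rw [integral_const_mul, Measure.integral_comp_smul, ContDiffBump.integral_normed]
  have : |(ε⁻¹ ^ d)⁻¹| = ε ^ d := by rw [abs_of_nonneg (by positivity)]; simp
  simp only [finrank_euclideanSpace, Fintype.card_fin, this, smul_eq_mul, mul_one]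
  rw [← mul_pow, inv_mul_cancel₀ hε.ne', one_pow]

theorem fderiv_moll_eq_zero {ε : ℝ} (hε : 0 < ε) {z : Euc d} (hz : z ∉ Metric.closedBall 0 ε) :
    fderiv ℝ (moll ε) z = 0 := by
  by_contra h
  exact hz (tsupport_moll_subset hε (tsupport_fderiv_subset ℝ (subset_tsupport _ h)))

theorem exists_moll_bound (d : ℕ) : ∃ C : ℝ, 0 ≤ C ∧ ∀ ε > 0, ∀ z : Euc d,
    |moll ε z| ≤ C * (ε⁻¹) ^ d ∧ ‖fderiv ℝ (moll ε) z‖ ≤ C * ε⁻¹ * (ε⁻¹) ^ d := by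
  obtain ⟨C₁, h₁⟩ := (unitBump d).hasCompactSupport_normed (μ := volume)
    |>.exists_bound_of_continuous (unitBump d).continuous_normed
  obtain ⟨C₂, h₂⟩ := ((unitBump d).hasCompactSupport_normed (μ := volume)).fderiv (𝕜 := ℝ)
    |>.exists_bound_of_continuous
      (((unitBump d).contDiff_normed (n := 1)).continuous_fderiv one_ne_zero)
  have hC₁ : 0 ≤ C₁ := (norm_nonneg _).trans (h₁ 0)
  have hC₂ : 0 ≤ C₂ := (norm_nonneg _).trans (h₂ 0)
  refine ⟨C₁ + C₂, by positivity, fun ε hε z => ⟨?_, ?_⟩⟩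
  · rw [moll, abs_mul, abs_of_nonneg (by positivity), mul_comm]
    gcongr
    have := h₁ (ε⁻¹ • z)
    rw [Real.norm_eq_abs] at this
    linarith
  · have hd : DifferentiableAt ℝ ((unitBump d).normed volume) (ε⁻¹ • z) :=
      ((unitBump d).contDiff_normed (n := 1)).differentiable one_ne_zero _
    have h : HasFDerivAt (moll (d := d) ε) (((ε⁻¹) ^ d) •
        ((fderiv ℝ ((unitBump d).normed volume) (ε⁻¹ • z)).comp
          (ε⁻¹ • ContinuousLinearMap.id ℝ (Euc d)))) z :=
      (hd.hasFDerivAt.comp z ((hasFDerivAt_id z).const_smul ε⁻¹)).const_mul _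
    rw [h.fderiv, norm_smul, Real.norm_of_nonneg (by positivity), mul_comm]
    gcongr
    rw [ContinuousLinearMap.comp_smul, ContinuousLinearMap.comp_id, norm_smul,
      Real.norm_of_nonneg (by positivity), mul_comm]
    gcongr
    linarith [h₂ (ε⁻¹ • z)]

theorem lintegral_comp_affine (h : Euc d → ℝ≥0∞) (a : Euc d) {l : ℝ} (hl : l ≠ 0) :
    ∫⁻ x, h (a + l • x) = ENNReal.ofReal |(l ^ d)⁻¹| * ∫⁻ x, h x := by
  rw [← lintegral_add_left_eq_self h a]
  have h1 := Measure.map_addHaar_smul (volume : Measure (Euc d)) hl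
  have h2 := lintegral_map_equiv (μ := (volume : Measure (Euc d))) (fun x => h (a + x))
    (Homeomorph.smulOfNeZero l hl).toMeasurableEquiv
  have h3 : ⇑(Homeomorph.smulOfNeZero l hl).toMeasurableEquiv = fun x : Euc d => l • x := rfl
  rw [h3] at h2
  have h4 : Measure.map (fun x : Euc d => l • x) volume = _ := h1
  rw [h4, lintegral_smul_measure] at h2
  simpa using h2.symm

theorem lintegral_closedBall_eq (h : Euc d → ℝ≥0∞) (a : Euc d) {ε : ℝ} (hε : 0 < ε) :
    ∫⁻ z in Metric.closedBall 0 1, h (a - ε • z) =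
      ENNReal.ofReal ((ε⁻¹) ^ d) * ∫⁻ y in Metric.closedBall a ε, h y := by
  rw [← lintegral_indicator measurableSet_closedBall, ← lintegral_indicator measurableSet_closedBall]
  have := lintegral_comp_affine ((Metric.closedBall a ε).indicator h) a (neg_ne_zero.2 hε.ne')
  have h2 : |((-ε) ^ d)⁻¹| = (ε⁻¹) ^ d := by
    rw [abs_inv, abs_pow, abs_neg, abs_of_pos hε, inv_pow]
  rw [h2] at this
  rw [← this]
  refine lintegral_congr fun z => ?_
  have : z ∈ Metric.closedBall (0 : Euc d) 1 ↔ a + -ε • z ∈ Metric.closedBall a ε := by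
    simp [norm_smul, abs_of_pos hε, hε]
  by_cases hz : z ∈ Metric.closedBall (0 : Euc d) 1
  · rw [indicator_of_mem hz, indicator_of_mem (this.1 hz), neg_smul, sub_eq_add_neg]
  · rw [indicator_of_notMem hz, indicator_of_notMem (fun h => hz (this.2 h))]

theorem enorm_integral_mul_kernel_le {k : Euc d → ℝ} {C ε : ℝ} (hε : 0 < ε)
    (hk : ∀ z, |k z| ≤ C * (ε⁻¹) ^ d) (hk0 : ∀ z ∉ Metric.closedBall 0 ε, k z = 0)
    (h : Euc d → ℝ) (a : Euc d) :
    ‖∫ y, h y * k (a - y)‖ₑ ≤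
      ENNReal.ofReal C * ∫⁻ z in Metric.closedBall 0 1, ‖h (a - ε • z)‖ₑ := by
  have hC : 0 ≤ C := by
    have := (abs_nonneg _).trans (hk 0)
    exact nonneg_of_mul_nonneg_left this (by positivity)
  rw [lintegral_closedBall_eq (fun y => ‖h y‖ₑ) a hε, ← mul_assoc, ← ENNReal.ofReal_mul hC,
    ← lintegral_const_mul' _ _ ENNReal.ofReal_ne_top, ← lintegral_indicator measurableSet_closedBall]
  refine (enorm_integral_le_lintegral_enorm _).trans (lintegral_mono fun y => ?_)
  by_cases hy : y ∈ Metric.closedBall a ε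
  · rw [indicator_of_mem hy, enorm_mul, mul_comm]
    gcongr
    rw [Real.enorm_eq_ofReal_abs]
    exact ENNReal.ofReal_le_ofReal (hk _)
  · rw [hk0 (a - y) (by simpa [dist_eq_norm, norm_sub_rev] using hy)]
    simp

/-- The mollification of `g` at scale `ε`. -/
noncomputable def mollify (g : Euc d → ℝ) (ε : ℝ) (a : Euc d) : ℝ :=
  ∫ y, g y * moll ε (a - y)

theorem mollify_eq_convolution (g : Euc d → ℝ) (ε : ℝ) :
    mollify g ε = convolution g (moll ε) (ContinuousLinearMap.mul ℝ ℝ) volume := rfl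

theorem contDiff_mollify {g : Euc d → ℝ} (hg : LocallyIntegrable g) {ε : ℝ} (hε : 0 < ε) :
    ContDiff ℝ ∞ (mollify g ε) := by
  rw [mollify_eq_convolution]
  exact (hasCompactSupport_moll hε).contDiff_convolution_right _ hg (contDiff_moll ε)

theorem fderiv_mollify {g : Euc d → ℝ} (hg : LocallyIntegrable g) {ε : ℝ} (hε : 0 < ε)
    (a v : Euc d) :
    fderiv ℝ (mollify g ε) a v = ∫ y, g y * fderiv ℝ (moll ε) (a - y) v := by
  have h1 : ContDiff ℝ 1 (moll (d := d) ε) := (contDiff_moll ε).of_le (by simp)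
  rw [mollify_eq_convolution, ((hasCompactSupport_moll hε).hasFDerivAt_convolution_right
    (ContinuousLinearMap.mul ℝ ℝ) hg h1 a).fderiv]
  rw [convolution_precompR_apply _ hg ((hasCompactSupport_moll hε).fderiv (𝕜 := ℝ))
    (h1.continuous_fderiv one_ne_zero)]
  rfl

theorem integrable_mul_moll {g : Euc d → ℝ} (hg : LocallyIntegrable g) {ε : ℝ} (hε : 0 < ε)
    (a : Euc d) : Integrable fun y => g y * moll ε (a - y) :=
  (hasCompactSupport_moll hε).convolutionExists_right (ContinuousLinearMap.mul ℝ ℝ) hg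
    (contDiff_moll ε).continuous a

theorem integral_moll_sub {ε : ℝ} (hε : 0 < ε) (a : Euc d) : ∫ y, moll ε (a - y) = 1 := by
  rw [integral_sub_left_eq_self (fun y => moll ε y) volume a, integral_moll hε]

theorem integrable_moll_sub {ε : ℝ} (hε : 0 < ε) (a : Euc d) :
    Integrable fun y => moll ε (a - y) := by
  have := integrable_mul_moll (g := fun _ => 1) (locallyIntegrable_const 1) hε a
  simpa using this

theorem abs_mollify_le {g : Euc d → ℝ} {B : ℝ} (hB : ∀ x, |g x| ≤ B) {ε : ℝ} (hε : 0 < ε)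
    (a : Euc d) : |mollify g ε a| ≤ B := by
  have h : ∫ y, B * moll ε (a - y) = B := by
    rw [integral_const_mul, integral_moll_sub hε, mul_one]
  rw [← Real.norm_eq_abs, ← h]
  refine norm_integral_le_of_norm_le ((integrable_moll_sub hε a).const_mul B)
    (Eventually.of_forall fun y => ?_)
  rw [norm_mul, Real.norm_eq_abs, Real.norm_of_nonneg (moll_nonneg hε _)]
  exact mul_le_mul_of_nonneg_right (hB y) (moll_nonneg hε _)

theorem ae_tendsto_mollify {g : Euc d → ℝ} (hg : LocallyIntegrable g) (K : ℝ) :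
    ∀ᵐ x, ∀ (a : ℕ → Euc d) (ε : ℕ → ℝ), Tendsto ε atTop (𝓝[>] 0) →
      (∀ᶠ n in atTop, x ∈ Metric.closedBall (a n) (K * ε n)) →
      Tendsto (fun n => mollify g (ε n) (a n)) atTop (𝓝 (g x)) := by
  obtain ⟨C, hC, hb⟩ := exists_moll_bound d
  filter_upwards [IsUnifLocDoublingMeasure.ae_tendsto_average_norm_sub volume hg K]
    with x hx a ε hε hxa
  have h1 := hx a ε hε hxa
  have hpos : ∀ᶠ n in atTop, 0 < ε n := hε.eventually self_mem_nhdsWithin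
  rw [tendsto_iff_norm_sub_tendsto_zero]
  set V : ℝ := volume.real (Metric.closedBall (0 : Euc d) 1)
  have h2 := h1.const_mul (C * V)
  rw [mul_zero] at h2
  refine squeeze_zero' (Eventually.of_forall fun _ => norm_nonneg _) ?_ h2
  filter_upwards [hpos] with n hn
  have e1 : mollify g (ε n) (a n) - g x = ∫ y, (g y - g x) * moll (ε n) (a n - y) := by
    simp_rw [sub_mul]
    rw [integral_sub (integrable_mul_moll hg hn _) ((integrable_moll_sub hn _).const_mul _),
      integral_const_mul, integral_moll_sub hn, mul_one, mollify]
  have hint : IntegrableOn (fun y => ‖g y - g x‖) (Metric.closedBall (a n) (ε n)) :=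
    ((hg.integrableOn_isCompact (isCompact_closedBall _ _)).sub
      (integrableOn_const (isCompact_closedBall _ _).measure_lt_top.ne)).norm
  rw [e1, setAverage_eq, smul_eq_mul]
  have hvol : volume.real (Metric.closedBall (a n) (ε n)) = ε n ^ d * V := by
    have := Measure.addHaar_closedBall' (volume : Measure (Euc d)) (a n) hn.le
    simp only [Measure.real, this, V]
    rw [ENNReal.toReal_mul, ENNReal.toReal_ofReal (by positivity), finrank_euclideanSpace,
      Fintype.card_fin]
  have hV : 0 < V := ENNReal.toReal_pos
    (Metric.measure_closedBall_pos _ _ one_pos).ne' (isCompact_closedBall _ _).measure_lt_top.ne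
  rw [hvol]
  have e2 : C * V * ((ε n ^ d * V)⁻¹ * ∫ y in Metric.closedBall (a n) (ε n), ‖g y - g x‖) =
      ∫ y, (Metric.closedBall (a n) (ε n)).indicator
        (fun y => C * (ε n)⁻¹ ^ d * ‖g y - g x‖) y := by
    rw [integral_indicator measurableSet_closedBall, integral_const_mul]
    have : (ε n) ^ d ≠ 0 := by positivity
    rw [inv_pow]
    field_simp
  rw [e2]
  refine norm_integral_le_of_norm_le
    ((integrable_indicator_iff measurableSet_closedBall).2 (hint.const_mul _))
    (Eventually.of_forall fun y => ?_)
  by_cases hy : y ∈ Metric.closedBall (a n) (ε n)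
  · rw [indicator_of_mem hy, norm_mul, mul_comm]
    gcongr
    exact (hb _ hn _).1
  · rw [indicator_of_notMem hy, moll_eq_zero hn (z := a n - y)
      (by simpa [dist_eq_norm, norm_sub_rev] using hy)]
    simp

theorem HasWeakGradOn.integral_fderiv_moll {O : Set (Euc d)} {f : Euc d → ℝ} {gf : Euc d → Euc d}
    (hO : MeasurableSet O) (h : HasWeakGradOn O f gf) {S : Set (Euc d)}
    (hSO : S ⊆ O) {ε : ℝ} (hε : 0 < ε) {a : Euc d} (ha : Metric.closedBall a ε ⊆ S) (v : Euc d) :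
    ∫ y, S.indicator f y * fderiv ℝ (moll ε) (a - y) v =
      mollify (S.indicator fun y => ⟪gf y, v⟫) ε a := by
  have hsub : ∀ y, y ∉ Metric.closedBall a ε → a - y ∉ Metric.closedBall 0 ε := fun y hy => by
    simpa [dist_eq_norm, norm_sub_rev] using hy
  have hts : tsupport (fun y => moll ε (a - y)) ⊆ Metric.closedBall a ε :=
    closure_minimal (fun y hy => by_contra fun h => hy (moll_eq_zero hε (hsub y h)))
      Metric.isClosed_closedBall
  have hcs : HasCompactSupport (fun y => moll ε (a - y)) :=
    HasCompactSupport.of_support_subset_isCompact (isCompact_closedBall a ε)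
      ((subset_tsupport _).trans hts)
  have hsm : ContDiff ℝ ∞ (fun y => moll ε (a - y)) :=
    (contDiff_moll ε).comp (contDiff_const.sub contDiff_id)
  have key := h.2.2 _ hsm hcs (hts.trans (ha.trans hSO)) v
  have hfd : ∀ y, fderiv ℝ (fun y => moll ε (a - y)) y v = - fderiv ℝ (moll ε) (a - y) v := by
    intro y
    have h1 : HasFDerivAt (moll ε) (fderiv ℝ (moll ε) (a - y)) (a - y) :=
      ((contDiff_moll ε).differentiable (by simp) _).hasFDerivAt
    have h2 := h1.comp y ((hasFDerivAt_id y).const_sub a)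
    have h3 : HasFDerivAt (fun y => moll ε (a - y)) _ y := h2
    rw [h3.fderiv]
    simp
  simp_rw [hfd, mul_neg] at key
  rw [integral_neg, neg_inj, ← integral_indicator hO, ← integral_indicator hO] at key
  rw [mollify]
  refine Eq.trans (integral_congr_ae (Eventually.of_forall fun y => ?_))
    (key.trans (integral_congr_ae (Eventually.of_forall fun y => ?_))) <;> dsimp only
  · by_cases hy : y ∈ Metric.closedBall a ε
    · rw [indicator_of_mem (ha hy), indicator_of_mem (hSO (ha hy))]
    · simp [indicator, fderiv_moll_eq_zero hε (hsub y hy)]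
  · by_cases hy : y ∈ Metric.closedBall a ε
    · rw [indicator_of_mem (ha hy), indicator_of_mem (hSO (ha hy))]
    · simp [moll_eq_zero hε (hsub y hy)]

theorem tendsto_lintegral_enorm_sub_of_le {α : Type*} [MeasurableSpace α] {μ : Measure α}
    {g : ℕ → α → ℝ} {g' : α → ℝ} {h : ℕ → α → ℝ≥0∞} {h' : α → ℝ≥0∞}
    (hg : ∀ n, AEMeasurable (g n) μ) (hg' : AEMeasurable g' μ)
    (hh : ∀ n, AEMeasurable (h n) μ) (hh' : AEMeasurable h' μ)
    (hle : ∀ n, ∀ᵐ x ∂μ, ‖g n x‖ₑ ≤ h n x)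
    (hlim : ∀ᵐ x ∂μ, Tendsto (fun n => g n x) atTop (𝓝 (g' x)))
    (hlim' : ∀ᵐ x ∂μ, Tendsto (fun n => h n x) atTop (𝓝 (h' x)))
    (hint : ∀ n, ∫⁻ x, h n x ∂μ ≤ ∫⁻ x, h' x ∂μ) (hfin : ∫⁻ x, h' x ∂μ ≠ ⊤) :
    Tendsto (fun n => ∫⁻ x, ‖g n x - g' x‖ₑ ∂μ) atTop (𝓝 0) := by
  set I := ∫⁻ x, h' x ∂μ
  have hle' : ∀ᵐ x ∂μ, ‖g' x‖ₑ ≤ h' x := by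
    filter_upwards [ae_all_iff.2 hle, hlim, hlim'] with x h1 h2 h3
    exact le_of_tendsto_of_tendsto' h2.enorm h3 h1
  have hs : ∀ n, ∀ᵐ x ∂μ, ‖g n x - g' x‖ₑ ≤ h n x + h' x := fun n => by
    filter_upwards [hle n, hle'] with x h1 h2
    exact enorm_sub_le.trans (add_le_add h1 h2)
  have hsm : ∀ n, AEMeasurable (fun x => ‖g n x - g' x‖ₑ) μ := fun n => ((hg n).sub hg').enorm
  have hsum : ∀ n, ∫⁻ x, (h n x + h' x - ‖g n x - g' x‖ₑ) ∂μ + ∫⁻ x, ‖g n x - g' x‖ₑ ∂μ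
      ≤ I + I := fun n => by
    rw [← lintegral_add_right' _ (hsm n)]
    calc _ = ∫⁻ x, (h n x + h' x) ∂μ := by
          refine lintegral_congr_ae ?_
          filter_upwards [hs n] with x hx
          exact tsub_add_cancel_of_le hx
      _ = ∫⁻ x, h n x ∂μ + I := lintegral_add_right' _ hh'
      _ ≤ I + I := by gcongr; exact hint n
  have hfatou : I + I ≤ liminf (fun n => ∫⁻ x, (h n x + h' x - ‖g n x - g' x‖ₑ) ∂μ) atTop := by
    refine le_trans (le_of_eq ?_) (lintegral_liminf_le' fun n => ((hh n).add hh').sub (hsm n))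
    rw [← lintegral_add_right' _ hh']
    refine lintegral_congr_ae ?_
    filter_upwards [hlim, hlim', ae_lt_top' hh' hfin] with x h1 h2 h3
    have h4 : Tendsto (fun n => ‖g n x - g' x‖ₑ) atTop (𝓝 0) := by
      have := (h1.sub_const (g' x)).enorm
      simpa using this
    have h5 := ENNReal.Tendsto.sub (h2.add_const (h' x)) h4 (Or.inr ENNReal.zero_ne_top)
    rw [tsub_zero] at h5
    exact h5.liminf_eq.symm
  rw [ENNReal.tendsto_nhds_zero]
  intro ε hε
  rcases eq_or_ne (I + I) 0 with h0 | h0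
  · refine Eventually.of_forall fun n => ?_
    have := hsum n
    rw [h0] at this
    exact (le_add_self.trans this).trans zero_le
  · have hII : I + I ≠ ⊤ := ENNReal.add_ne_top.2 ⟨hfin, hfin⟩
    have hlt : I + I - ε < liminf (fun n => ∫⁻ x, (h n x + h' x - ‖g n x - g' x‖ₑ) ∂μ) atTop :=
      (ENNReal.sub_lt_self hII h0 hε.ne').trans_le hfatou
    filter_upwards [eventually_lt_of_lt_liminf hlt] with n hn
    have h1 := hsum n
    have h2 : ∫⁻ x, (h n x + h' x - ‖g n x - g' x‖ₑ) ∂μ ≠ ⊤ :=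
      ne_top_of_le_ne_top hII (le_self_add.trans h1)
    have h3 : I + I ≤ ∫⁻ x, (h n x + h' x - ‖g n x - g' x‖ₑ) ∂μ + ε :=
      tsub_le_iff_right.1 hn.le
    exact (ENNReal.add_le_add_iff_left h2).1 (h1.trans h3)

theorem tendsto_lintegral_mollify_sub {g : Euc d → ℝ} (hg : Integrable g) {ε : ℕ → ℝ}
    (hε : Tendsto ε atTop (𝓝[>] 0)) (hpos : ∀ n, 0 < ε n) :
    Tendsto (fun n => ∫⁻ x, ‖mollify g (ε n) x - g x‖ₑ) atTop (𝓝 0) := by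
  have hmem : ∀ x : Euc d, ∀ᶠ n in atTop, x ∈ Metric.closedBall x (1 * ε n) := fun x =>
    Eventually.of_forall fun n => Metric.mem_closedBall_self (by simpa using (hpos n).le)
  refine tendsto_lintegral_enorm_sub_of_le
    (h := fun n x => ENNReal.ofReal (mollify (fun y => |g y|) (ε n) x)) (h' := fun x => ‖g x‖ₑ)
    (fun n => (contDiff_mollify hg.locallyIntegrable (hpos n)).continuous.aemeasurable)
    hg.aemeasurable
    (fun n => (contDiff_mollify hg.abs.locallyIntegrable
      (hpos n)).continuous.aemeasurable.ennreal_ofReal)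
    hg.aemeasurable.enorm (fun n => Eventually.of_forall fun x => ?_) ?_ ?_ (fun n => ?_)
    hg.2.ne
  · rw [Real.enorm_eq_ofReal_abs]
    refine ENNReal.ofReal_le_ofReal ((abs_integral_le_integral_abs).trans (le_of_eq ?_))
    simp_rw [abs_mul, abs_of_nonneg (moll_nonneg (hpos n) _)]
    rfl
  · filter_upwards [ae_tendsto_mollify hg.locallyIntegrable 1] with x hx
    exact hx (fun _ => x) ε hε (hmem x)
  · filter_upwards [ae_tendsto_mollify hg.abs.locallyIntegrable 1] with x hx
    simp_rw [Real.enorm_eq_ofReal_abs]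
    exact (ENNReal.continuous_ofReal.tendsto _).comp (hx (fun _ => x) ε hε (hmem x))
  · have h1 : ∀ x, ENNReal.ofReal (mollify (fun y => |g y|) (ε n) x) =
        ∫⁻ y, ‖g y‖ₑ * ENNReal.ofReal (moll (ε n) (x - y)) := fun x => by
      rw [mollify, ofReal_integral_eq_lintegral_ofReal
        (integrable_mul_moll hg.abs.locallyIntegrable (hpos n) x)
        (Eventually.of_forall fun y => mul_nonneg (abs_nonneg _) (moll_nonneg (hpos n) _))]
      refine lintegral_congr fun y => ?_
      rw [ENNReal.ofReal_mul (abs_nonneg _), Real.enorm_eq_ofReal_abs]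
    simp_rw [h1]
    have hm : Measurable (moll (d := d) (ε n)) := (contDiff_moll _).continuous.measurable
    rw [lintegral_lintegral_swap]
    · refine lintegral_mono fun y => ?_
      have hm' : Measurable fun x => ENNReal.ofReal (moll (ε n) (x - y)) :=
        (hm.comp (measurable_id.sub_const y)).ennreal_ofReal
      rw [lintegral_const_mul _ hm']
      have h2 : ∫⁻ x, ENNReal.ofReal (moll (ε n) (x - y)) = 1 := by
        rw [lintegral_sub_right_eq_self (fun x => ENNReal.ofReal (moll (ε n) x)) y,
          ← ofReal_integral_eq_lintegral_ofReal, integral_moll (hpos n), ENNReal.ofReal_one]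
        · simpa using integrable_moll_sub (d := d) (hpos n) 0 |>.comp_neg
        · exact Eventually.of_forall fun z => moll_nonneg (hpos n) z
      rw [h2, mul_one]
    · exact (hg.aemeasurable.comp_snd.enorm).mul
        (hm.comp (measurable_fst.sub measurable_snd)).ennreal_ofReal.aemeasurable

theorem tendsto_integral_mul_of_bounded {α : Type*} [MeasurableSpace α] {μ : Measure α}
    {a g : ℕ → α → ℝ} {a' g' : α → ℝ} {B : ℝ} (ha : ∀ n, AEStronglyMeasurable (a n) μ)
    (hab : ∀ n x, |a n x| ≤ B) (hlim : ∀ᵐ x ∂μ, Tendsto (fun n => a n x) atTop (𝓝 (a' x)))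
    (hg : ∀ n, Integrable (g n) μ) (hg' : Integrable g' μ)
    (hL : Tendsto (fun n => ∫⁻ x, ‖g n x - g' x‖ₑ ∂μ) atTop (𝓝 0)) :
    Tendsto (fun n => ∫ x, a n x * g n x ∂μ) atTop (𝓝 (∫ x, a' x * g' x ∂μ)) := by
  have h1 : Tendsto (fun n => ∫ x, a n x * g' x ∂μ) atTop (𝓝 (∫ x, a' x * g' x ∂μ)) := by
    refine tendsto_integral_of_dominated_convergence (fun x => B * |g' x|)
      (fun n => (ha n).mul hg'.1) (hg'.abs.const_mul B)
      (fun n => Eventually.of_forall fun x => ?_) ?_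
    · rw [norm_mul]
      exact mul_le_mul_of_nonneg_right (hab n x) (abs_nonneg _)
    · filter_upwards [hlim] with x hx using hx.mul_const _
  have hi : ∀ n, Integrable (fun x => a n x * (g n x - g' x)) μ := fun n =>
    ((hg n).sub hg').bdd_mul (ha n) (Eventually.of_forall fun x => hab n x)
  have hi' : ∀ n, Integrable (fun x => a n x * g' x) μ := fun n =>
    hg'.bdd_mul (ha n) (Eventually.of_forall fun x => hab n x)
  have h2 : Tendsto (fun n => ∫ x, a n x * (g n x - g' x) ∂μ) atTop (𝓝 0) := by
    have h3 : Tendsto (fun n => ∫ x, a n x * (g n x - g' x) ∂μ) atTop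
        (𝓝 (∫ _, (0 : ℝ) ∂μ)) := by
      refine tendsto_integral_of_L1 _ aestronglyMeasurable_const
        (Eventually.of_forall hi) ?_
      have h4 := ENNReal.Tendsto.const_mul (a := ENNReal.ofReal B) hL
        (Or.inr ENNReal.ofReal_ne_top)
      rw [mul_zero] at h4
      refine tendsto_of_tendsto_of_tendsto_of_le_of_le tendsto_const_nhds h4
        (fun _ => zero_le) fun n => ?_
      dsimp only
      rw [← lintegral_const_mul' _ _ ENNReal.ofReal_ne_top]
      refine lintegral_mono fun x => ?_
      rw [sub_zero, enorm_mul]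
      gcongr
      rw [Real.enorm_eq_ofReal_abs]
      exact ENNReal.ofReal_le_ofReal (hab n x)
    simpa using h3
  have h5 := h2.add h1
  rw [zero_add] at h5
  refine h5.congr fun n => ?_
  rw [← integral_add (hi n) (hi' n)]
  congr 1
  ext x
  ring

theorem integral_mul_fderiv_eq_neg {F p : Euc d → ℝ} (hF : ContDiff ℝ ∞ F)
    (hp : ContDiff ℝ ∞ p) (hpc : HasCompactSupport p) (v : Euc d) :
    ∫ x, F x * fderiv ℝ p x v = - ∫ x, fderiv ℝ F x v * p x := by
  have hpv : Continuous fun x => fderiv ℝ p x v :=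
    (hp.continuous_fderiv (by simp)).clm_apply continuous_const
  have hFv : Continuous fun x => fderiv ℝ F x v :=
    (hF.continuous_fderiv (by simp)).clm_apply continuous_const
  have hpvc : HasCompactSupport fun x => fderiv ℝ p x v := hpc.fderiv_apply (𝕜 := ℝ) v
  refine integral_mul_fderiv_eq_neg_fderiv_mul_of_integrable ?_ ?_ ?_
    (fun x _ => hF.differentiable (by simp) x) (fun x _ => hp.differentiable (by simp) x)
  · exact (hFv.mul hp.continuous).integrable_of_hasCompactSupport hpc.mul_left
  · exact (hF.continuous.mul hpv).integrable_of_hasCompactSupport hpvc.mul_left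
  · exact (hF.continuous.mul hp.continuous).integrable_of_hasCompactSupport hpc.mul_left

theorem setIntegral_eq_of_eq_zero {O K : Set (Euc d)} (hO : MeasurableSet O) (hK : K ⊆ O)
    {q : Euc d → ℝ} (hq : ∀ x ∉ K, q x = 0) : ∫ x in O, q x = ∫ x in K, q x :=
  setIntegral_eq_of_subset_of_forall_sdiff_eq_zero hO hK fun x hx => hq x hx.2

theorem HasWeakGradOn.exists_smooth_approx {O : Set (Euc d)} (hO : IsOpen O) {f : Euc d → ℝ}
    {gf : Euc d → Euc d} (h : HasWeakGradOn O f gf) {K : Set (Euc d)} (hK : IsCompact K)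
    (hKO : K ⊆ O) :
    ∃ F : ℕ → Euc d → ℝ, (∀ n, ContDiff ℝ ∞ (F n)) ∧
      (∀ᵐ x ∂(volume.restrict K), Tendsto (fun n => F n x) atTop (𝓝 (f x))) ∧
      (∀ B, (∀ x, |f x| ≤ B) → ∀ n x, |F n x| ≤ B) ∧
      ∀ v, Tendsto (fun n => ∫⁻ x in K, ‖fderiv ℝ (F n) x v - ⟪gf x, v⟫‖ₑ) atTop (𝓝 0) := by
  obtain ⟨δ, hδ, hδO⟩ := hK.exists_cthickening_subset_open hO hKO
  set S := Metric.cthickening δ K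
  have hS : IsCompact S := hK.cthickening
  have hKS : K ⊆ S := Metric.self_subset_cthickening K
  have hSm : MeasurableSet S := hS.measurableSet
  have hfS : Integrable (S.indicator f) :=
    (integrable_indicator_iff hSm).2 (h.1.integrableOn_compact_subset hδO hS)
  set ε : ℕ → ℝ := fun n => δ * (1 / ((n : ℝ) + 1))
  have hpos : ∀ n, 0 < ε n := fun n => by positivity
  have hle : ∀ n, ε n ≤ δ := fun n => by
    refine mul_le_of_le_one_right hδ.le ?_
    rw [div_le_one (by positivity)]
    linarith [n.cast_nonneg (α := ℝ)]
  have hε : Tendsto ε atTop (𝓝[>] 0) := by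
    refine tendsto_nhdsWithin_iff.2 ⟨?_, Eventually.of_forall hpos⟩
    simpa only [mul_zero] using (tendsto_one_div_add_atTop_nhds_zero_nat (𝕜 := ℝ)).const_mul δ
  refine ⟨fun n => mollify (S.indicator f) (ε n), fun n =>
    contDiff_mollify hfS.locallyIntegrable (hpos n), ?_, fun B hB n x => ?_, fun v => ?_⟩
  · refine (ae_restrict_iff' hK.measurableSet).2 ?_
    filter_upwards [ae_tendsto_mollify hfS.locallyIntegrable 1] with x hx hxK
    have := hx (fun _ => x) ε hε
      (Eventually.of_forall fun n => Metric.mem_closedBall_self (by simpa using (hpos n).le))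
    rwa [indicator_of_mem (hKS hxK)] at this
  · refine abs_mollify_le (fun y => ?_) (hpos n) x
    have hB0 : 0 ≤ B := (abs_nonneg _).trans (hB 0)
    by_cases hy : y ∈ S <;> simp [hy, hB, hB0]
  · have hg : Integrable (S.indicator fun y => ⟪gf y, v⟫) :=
      (integrable_indicator_iff hSm).2
        ((h.2.1.integrableOn_compact_subset hδO hS).inner_const v)
    refine tendsto_of_tendsto_of_tendsto_of_le_of_le tendsto_const_nhds
      (tendsto_lintegral_mollify_sub hg hε hpos) (fun _ => zero_le) fun n => ?_
    refine le_trans (le_of_eq ?_) (setLIntegral_le_lintegral K _)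
    refine setLIntegral_congr_fun hK.measurableSet fun x hx => ?_
    dsimp only
    have hb : Metric.closedBall x (ε n) ⊆ S :=
      (Metric.closedBall_subset_closedBall (hle n)).trans
        (Metric.closedBall_subset_cthickening hx δ)
    rw [fderiv_mollify hfS.locallyIntegrable (hpos n),
      h.integral_fderiv_moll hO.measurableSet hδO (hpos n) hb v, indicator_of_mem (hKS hx)]

theorem HasWeakGradOn.comp_smooth {O : Set (Euc d)} (hO : IsOpen O) {f : Euc d → ℝ}
    {gf : Euc d → Euc d} (h : HasWeakGradOn O f gf) {χ : ℝ → ℝ} (hχ : ContDiff ℝ ∞ χ) {B : ℝ}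
    (hB : ∀ t, |χ t| ≤ B) (hd : ∀ t, |deriv χ t| ≤ 1) :
    HasWeakGradOn O (fun x => χ (f x)) (fun x => deriv χ (f x) • gf x) := by
  have hdc : Continuous (deriv χ) := hχ.continuous_deriv (by simp)
  have hfm := h.1.aestronglyMeasurable
  have hgm := h.2.1.aestronglyMeasurable
  refine ⟨?_, ?_, fun p hp hpc hpO v => ?_⟩
  · refine (locallyIntegrableOn_iff hO.isLocallyClosed).2 fun K hKO hK => ?_
    refine Integrable.mono' (g := fun _ => B) (integrableOn_const hK.measure_lt_top.ne)
      (hχ.continuous.comp_aestronglyMeasurable (hfm.mono_set hKO)) ?_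
    exact Eventually.of_forall fun x => hB _
  · refine (locallyIntegrableOn_iff hO.isLocallyClosed).2 fun K hKO hK => ?_
    refine Integrable.mono' (h.2.1.integrableOn_compact_subset hKO hK).norm
      ((hdc.comp_aestronglyMeasurable (hfm.mono_set hKO)).smul (hgm.mono_set hKO)) ?_
    refine Eventually.of_forall fun x => ?_
    rw [norm_smul]
    exact mul_le_of_le_one_left (norm_nonneg _) (hd _)
  · set K := tsupport p
    have hK : IsCompact K := hpc
    obtain ⟨F, hF, hlim, -, hL⟩ := h.exists_smooth_approx hO hK hpO
    have hp0 : ∀ x ∉ K, p x = 0 := fun x hx => image_eq_zero_of_notMem_tsupport hx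
    have hp0' : ∀ x ∉ K, fderiv ℝ p x v = 0 := fun x hx => by
      rw [fderiv_of_notMem_tsupport ℝ hx]; rfl
    have hpv : Continuous fun x => fderiv ℝ p x v :=
      (hp.continuous_fderiv (by simp)).clm_apply continuous_const
    obtain ⟨P, hP⟩ := hpc.exists_bound_of_continuous hp.continuous
    have hP0 : 0 ≤ P := (norm_nonneg _).trans (hP 0)
    have hB0 : 0 ≤ B := (abs_nonneg _).trans (hB 0)
    rw [setIntegral_eq_of_eq_zero hO.measurableSet hpO (fun x hx => by rw [hp0' x hx, mul_zero]),
      setIntegral_eq_of_eq_zero hO.measurableSet hpO (fun x hx => by rw [hp0 x hx, mul_zero])]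
    have hL1 : Tendsto (fun n => ∫ x in K, χ (F n x) * fderiv ℝ p x v) atTop
        (𝓝 (∫ x in K, χ (f x) * fderiv ℝ p x v)) := by
      refine tendsto_integral_mul_of_bounded (B := B) (g := fun _ x => fderiv ℝ p x v)
        (fun n => (hχ.continuous.comp (hF n).continuous).aestronglyMeasurable)
        (fun n x => hB _) ?_ (fun _ => (hpv.continuousOn.integrableOn_compact hK))
        (hpv.continuousOn.integrableOn_compact hK) (by simp)
      filter_upwards [hlim] with x hx
      exact (hχ.continuous.tendsto _).comp hx
    have hL2 : Tendsto (fun n => ∫ x in K, (deriv χ (F n x) * p x) * fderiv ℝ (F n) x v) atTop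
        (𝓝 (∫ x in K, (deriv χ (f x) * p x) * ⟪gf x, v⟫)) := by
      refine tendsto_integral_mul_of_bounded (B := 1 * P)
        (fun n => ((hdc.comp (hF n).continuous).mul hp.continuous).aestronglyMeasurable)
        (fun n x => ?_) ?_ (fun n => ?_)
        ((h.2.1.integrableOn_compact_subset hpO hK).inner_const v) (hL v)
      · rw [abs_mul]
        exact mul_le_mul (hd _) (hP x) (abs_nonneg _) zero_le_one
      · filter_upwards [hlim] with x hx
        exact ((hdc.tendsto _).comp hx).mul_const _
      · exact (((hF n).continuous_fderiv (by simp)).clm_apply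
          continuous_const).continuousOn.integrableOn_compact hK
    have heq : ∀ n, ∫ x in K, χ (F n x) * fderiv ℝ p x v =
        - ∫ x in K, (deriv χ (F n x) * p x) * fderiv ℝ (F n) x v := fun n => by
      have ip : ∫ x, χ (F n x) * fderiv ℝ p x v = - ∫ x, fderiv ℝ (χ ∘ F n) x v * p x :=
        integral_mul_fderiv_eq_neg (hχ.comp (hF n)) hp hpc v
      rw [setIntegral_eq_integral_of_forall_compl_eq_zero
          (fun x hx => by rw [hp0' x hx, mul_zero]),
        setIntegral_eq_integral_of_forall_compl_eq_zero
          (fun x hx => by rw [hp0 x hx, mul_zero, zero_mul]),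
        ip]
      congr 2
      ext x
      have h1 : HasFDerivAt (fun x => χ (F n x)) _ x :=
        ((hχ.differentiable (by simp) (F n x)).hasDerivAt).comp_hasFDerivAt x
          ((hF n).differentiable (by simp) x).hasFDerivAt
      have h2 : fderiv ℝ (χ ∘ F n) x = deriv χ (F n x) • fderiv ℝ (F n) x := h1.fderiv
      rw [h2]
      simp only [smul_apply, smul_eq_mul]
      ring
    have := tendsto_nhds_unique hL1 (hL2.neg.congr fun n => (heq n).symm)
    rw [this]
    congr 2
    ext x
    rw [real_inner_smul_left]
    ring

theorem HasWeakGradOn.integral_mul_of_bounded {O : Set (Euc d)} (hO : IsOpen O)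
    {f w : Euc d → ℝ} {gf gw : Euc d → Euc d} (hf : HasWeakGradOn O f gf)
    (hw : HasWeakGradOn O w gw) {B N : ℝ} (hB : ∀ x, |f x| ≤ B) (hN : ∀ x, |w x| ≤ N)
    {p : Euc d → ℝ} (hp : ContDiff ℝ ∞ p) (hpc : HasCompactSupport p) (hpO : tsupport p ⊆ O)
    (v : Euc d) :
    ∫ x in tsupport p, (f x * fderiv ℝ p x v) * w x =
      -(∫ x in tsupport p, (f x * p x) * ⟪gw x, v⟫) -
        ∫ x in tsupport p, (w x * p x) * ⟪gf x, v⟫ := by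
  set K := tsupport p
  have hK : IsCompact K := hpc
  obtain ⟨F, hF, hlim, hFB, hL⟩ := hf.exists_smooth_approx hO hK hpO
  have hp0 : ∀ x ∉ K, p x = 0 := fun x hx => image_eq_zero_of_notMem_tsupport hx
  have hp0' : ∀ x ∉ K, fderiv ℝ p x v = 0 := fun x hx => by
    rw [fderiv_of_notMem_tsupport ℝ hx]; rfl
  have hpv : Continuous fun x => fderiv ℝ p x v :=
    (hp.continuous_fderiv (by simp)).clm_apply continuous_const
  obtain ⟨P, hP⟩ := hpc.exists_bound_of_continuous hp.continuous
  obtain ⟨P', hP'⟩ := (hpc.fderiv_apply (𝕜 := ℝ) v).exists_bound_of_continuous hpv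
  have hB0 : 0 ≤ B := (abs_nonneg _).trans (hB 0)
  have hN0 : 0 ≤ N := (abs_nonneg _).trans (hN 0)
  have hFv : ∀ n, Continuous fun x => fderiv ℝ (F n) x v := fun n =>
    ((hF n).continuous_fderiv (by simp)).clm_apply continuous_const
  have hwK : IntegrableOn w K := hw.1.integrableOn_compact_subset hpO hK
  have hgwK : IntegrableOn (fun x => ⟪gw x, v⟫) K :=
    (hw.2.1.integrableOn_compact_subset hpO hK).inner_const v
  have hgfK : IntegrableOn (fun x => ⟪gf x, v⟫) K :=
    (hf.2.1.integrableOn_compact_subset hpO hK).inner_const v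
  have hFvK : ∀ n, IntegrableOn (fun x => fderiv ℝ (F n) x v) K := fun n =>
    (hFv n).continuousOn.integrableOn_compact hK
  have b1 : ∀ n x, |F n x * fderiv ℝ p x v| ≤ B * P' := fun n x => by
    rw [abs_mul]
    exact mul_le_mul (hFB B hB n x) (hP' x) (abs_nonneg _) hB0
  have b2 : ∀ n x, |F n x * p x| ≤ B * P := fun n x => by
    rw [abs_mul]
    exact mul_le_mul (hFB B hB n x) (hP x) (abs_nonneg _) hB0
  have b3 : ∀ x, |w x * p x| ≤ N * P := fun x => by
    rw [abs_mul]
    exact mul_le_mul (hN x) (hP x) (abs_nonneg _) hN0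
  have m3 : AEStronglyMeasurable (fun x => w x * p x) (volume.restrict K) :=
    hwK.1.mul hp.continuous.aestronglyMeasurable
  have L1 := tendsto_integral_mul_of_bounded (μ := volume.restrict K)
    (a := fun n x => F n x * fderiv ℝ p x v) (a' := fun x => f x * fderiv ℝ p x v)
    (g := fun _ => w) (g' := w)
    (fun n => ((hF n).continuous.mul hpv).aestronglyMeasurable) b1
    (by filter_upwards [hlim] with x hx using hx.mul_const _) (fun _ => hwK) hwK (by simp)
  have L2 := tendsto_integral_mul_of_bounded (μ := volume.restrict K)
    (a := fun n x => F n x * p x) (a' := fun x => f x * p x)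
    (g := fun _ x => ⟪gw x, v⟫) (g' := fun x => ⟪gw x, v⟫)
    (fun n => ((hF n).continuous.mul hp.continuous).aestronglyMeasurable) b2
    (by filter_upwards [hlim] with x hx using hx.mul_const _) (fun _ => hgwK) hgwK (by simp)
  have L3 := tendsto_integral_mul_of_bounded (μ := volume.restrict K)
    (a := fun _ x => w x * p x) (a' := fun x => w x * p x)
    (g := fun n x => fderiv ℝ (F n) x v) (g' := fun x => ⟪gf x, v⟫)
    (fun n => m3) (fun _ => b3) (by simp) hFvK hgfK (hL v)
  refine tendsto_nhds_unique L1 ((L2.neg.sub L3).congr fun n => ?_)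
  have hts : tsupport (fun x => F n x * p x) ⊆ K := tsupport_mul_subset_right
  have hd : ∀ x, fderiv ℝ (fun x => F n x * p x) x v =
      F n x * fderiv ℝ p x v + p x * fderiv ℝ (F n) x v := fun x => by
    rw [fderiv_fun_mul ((hF n).differentiable (by simp) x) (hp.differentiable (by simp) x)]
    simp
  have key := hw.2.2 (fun x => F n x * p x) ((hF n).mul hp) hpc.mul_left (hts.trans hpO) v
  simp_rw [hd] at key
  rw [setIntegral_eq_of_eq_zero hO.measurableSet hpO
      (fun x hx => by rw [hp0' x hx, hp0 x hx]; ring),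
    setIntegral_eq_of_eq_zero hO.measurableSet hpO
      (fun x hx => by rw [hp0 x hx]; ring)] at key
  have e1 : ∫ x in K, w x * (F n x * fderiv ℝ p x v + p x * fderiv ℝ (F n) x v) =
      (∫ x in K, (F n x * fderiv ℝ p x v) * w x) + ∫ x in K, (w x * p x) * fderiv ℝ (F n) x v := by
    rw [← integral_add]
    · congr 1
      ext x
      ring
    · exact hwK.bdd_mul ((hF n).continuous.mul hpv).aestronglyMeasurable
        (Eventually.of_forall fun x => b1 n x)
    · exact (hFvK n).bdd_mul m3 (Eventually.of_forall fun x => b3 x)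
  have e2 : ∫ x in K, ⟪gw x, v⟫ * (F n x * p x) = ∫ x in K, (F n x * p x) * ⟪gw x, v⟫ := by
    congr 1
    ext x
    ring
  rw [e1, e2] at key
  linarith

/-- A smooth truncation at level `N`. -/
noncomputable def truncate (N t : ℝ) : ℝ := N * Real.sin (t / N)

theorem contDiff_truncate (N : ℝ) : ContDiff ℝ ∞ (truncate N) :=
  contDiff_const.mul (Real.contDiff_sin.comp (contDiff_id.div_const N))

theorem abs_truncate_le {N : ℝ} (hN : 0 < N) (t : ℝ) : |truncate N t| ≤ N := by
  rw [truncate, abs_mul, abs_of_pos hN]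
  exact mul_le_of_le_one_right hN.le (Real.abs_sin_le_one _)

theorem abs_truncate_le_abs {N : ℝ} (hN : 0 < N) (t : ℝ) : |truncate N t| ≤ |t| := by
  rw [truncate, abs_mul, abs_of_pos hN]
  calc N * |Real.sin (t / N)| ≤ N * |t / N| :=
      mul_le_mul_of_nonneg_left Real.abs_sin_le_abs hN.le
    _ = |t| := by rw [abs_div, abs_of_pos hN]; field_simp

theorem deriv_truncate {N : ℝ} (hN : 0 < N) (t : ℝ) : deriv (truncate N) t = Real.cos (t / N) := by
  have h : HasDerivAt (truncate N) (N * (Real.cos (t / N) * (1 / N))) t :=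
    (((hasDerivAt_id t).div_const N).sin).const_mul N
  rw [h.deriv]
  field_simp

theorem abs_deriv_truncate_le {N : ℝ} (hN : 0 < N) (t : ℝ) : |deriv (truncate N) t| ≤ 1 := by
  rw [deriv_truncate hN]
  exact Real.abs_cos_le_one _

theorem tendsto_div_nat_add_one (t : ℝ) :
    Tendsto (fun n : ℕ => t / ((n : ℝ) + 1)) atTop (𝓝 0) := by
  simpa [div_eq_mul_inv] using (tendsto_one_div_add_atTop_nhds_zero_nat (𝕜 := ℝ)).const_mul t

theorem tendsto_deriv_truncate (t : ℝ) :
    Tendsto (fun n : ℕ => deriv (truncate ((n : ℝ) + 1)) t) atTop (𝓝 1) := by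
  have := (Real.continuous_cos.tendsto 0).comp (tendsto_div_nat_add_one t)
  rw [Real.cos_zero] at this
  refine this.congr fun n => ?_
  rw [deriv_truncate (by positivity)]
  rfl

theorem tendsto_truncate (t : ℝ) :
    Tendsto (fun n : ℕ => truncate ((n : ℝ) + 1) t) atTop (𝓝 t) := by
  have h1 : Tendsto Real.sinc (𝓝 0) (𝓝 1) := by
    simpa using Real.continuous_sinc.tendsto 0
  have h2 := (h1.comp (tendsto_div_nat_add_one t)).const_mul t
  rw [mul_one] at h2
  refine h2.congr fun n => ?_
  have hn : (n : ℝ) + 1 ≠ 0 := by positivity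
  rcases eq_or_ne t 0 with rfl | ht
  · simp [truncate]
  · rw [Function.comp, Real.sinc_of_ne_zero (div_ne_zero ht hn), truncate]
    field_simp

theorem HasWeakGradOn.mul {O : Set (Euc d)} (hO : IsOpen O)
    {f w : Euc d → ℝ} {gf gw : Euc d → Euc d} (hf : HasWeakGradOn O f gf)
    (hw : HasWeakGradOn O w gw) {B : ℝ} (hB : ∀ x, |f x| ≤ B)
    (hwf : LocallyIntegrableOn (fun x => w x • gf x) O) :
    HasWeakGradOn O (fun x => w x * f x) (fun x => w x • gf x + f x • gw x) := by
  have hfm := hf.1.aestronglyMeasurable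
  have hfgw : LocallyIntegrableOn (fun x => f x • gw x) O := by
    refine (locallyIntegrableOn_iff hO.isLocallyClosed).2 fun K hKO hK => ?_
    exact (hw.2.1.integrableOn_compact_subset hKO hK).bdd_smul B (hfm.mono_set hKO)
      (Eventually.of_forall fun x => hB x)
  refine ⟨?_, hwf.add hfgw, fun p hp hpc hpO v => ?_⟩
  · refine (locallyIntegrableOn_iff hO.isLocallyClosed).2 fun K hKO hK => ?_
    exact (hw.1.integrableOn_compact_subset hKO hK).mul_bdd (c := B) (hfm.mono_set hKO)
      (Eventually.of_forall fun x => hB x)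
  set K := tsupport p
  have hK : IsCompact K := hpc
  have hp0 : ∀ x ∉ K, p x = 0 := fun x hx => image_eq_zero_of_notMem_tsupport hx
  have hp0' : ∀ x ∉ K, fderiv ℝ p x v = 0 := fun x hx => by
    rw [fderiv_of_notMem_tsupport ℝ hx]; rfl
  have hpv : Continuous fun x => fderiv ℝ p x v :=
    (hp.continuous_fderiv (by simp)).clm_apply continuous_const
  obtain ⟨P, hP⟩ := hpc.exists_bound_of_continuous hp.continuous
  obtain ⟨P', hP'⟩ := (hpc.fderiv_apply (𝕜 := ℝ) v).exists_bound_of_continuous hpv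
  have hP0 : 0 ≤ P := (norm_nonneg _).trans (hP 0)
  have hB0 : 0 ≤ B := (abs_nonneg _).trans (hB 0)
  have hwK : IntegrableOn w K := hw.1.integrableOn_compact_subset hpO hK
  have hgwK : IntegrableOn (fun x => ⟪gw x, v⟫) K :=
    (hw.2.1.integrableOn_compact_subset hpO hK).inner_const v
  have hwgfK : IntegrableOn (fun x => w x * ⟪gf x, v⟫) K := by
    have := (hwf.integrableOn_compact_subset hpO hK).inner_const (𝕜 := ℝ) v
    exact this.congr (Eventually.of_forall fun x => real_inner_smul_left _ _ _)
  have hfK := hfm.mono_set hpO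
  have hgfK : IntegrableOn (fun x => ⟪gf x, v⟫) K :=
    (hf.2.1.integrableOn_compact_subset hpO hK).inner_const v
  rw [setIntegral_eq_of_eq_zero hO.measurableSet hpO (fun x hx => by rw [hp0' x hx, mul_zero]),
    setIntegral_eq_of_eq_zero hO.measurableSet hpO (fun x hx => by rw [hp0 x hx, mul_zero])]
  have id0 := fun n : ℕ => hf.integral_mul_of_bounded hO
    (hw.comp_smooth hO (contDiff_truncate ((n : ℝ) + 1)) (abs_truncate_le (by positivity))
      (abs_deriv_truncate_le (by positivity))) hB
    (fun x => abs_truncate_le (N := (n : ℝ) + 1) (by positivity) (w x)) hp hpc hpO v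
  have tm : ∀ n : ℕ, AEStronglyMeasurable (fun x => truncate ((n : ℝ) + 1) (w x))
      (volume.restrict K) := fun n =>
    (contDiff_truncate _).continuous.comp_aestronglyMeasurable hwK.1
  have L1 : Tendsto (fun n : ℕ => ∫ x in K, (f x * fderiv ℝ p x v) * truncate ((n : ℝ) + 1) (w x))
      atTop (𝓝 (∫ x in K, (f x * fderiv ℝ p x v) * w x)) := by
    refine tendsto_integral_of_dominated_convergence (fun x => B * P' * |w x|)
      (fun n => (hfK.mul hpv.aestronglyMeasurable).mul (tm n)) (hwK.abs.const_mul _)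
      (fun n => Eventually.of_forall fun x => ?_) (Eventually.of_forall fun x => ?_)
    · rw [norm_mul, norm_mul]
      exact mul_le_mul (mul_le_mul (hB x) (hP' x) (norm_nonneg _) hB0)
        (abs_truncate_le_abs (by positivity) _) (norm_nonneg _)
        (mul_nonneg hB0 ((norm_nonneg _).trans (hP' 0)))
    · exact (tendsto_truncate (w x)).const_mul _
  have L2 : Tendsto (fun n : ℕ => ∫ x in K, (f x * p x) *
        ⟪deriv (truncate ((n : ℝ) + 1)) (w x) • gw x, v⟫)
      atTop (𝓝 (∫ x in K, (f x * p x) * ⟪gw x, v⟫)) := by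
    simp_rw [real_inner_smul_left]
    refine tendsto_integral_of_dominated_convergence (fun x => B * P * |⟪gw x, v⟫|)
      (fun n => (hfK.mul hp.continuous.aestronglyMeasurable).mul
        ((((contDiff_truncate _).continuous_deriv (by simp)).comp_aestronglyMeasurable
          hwK.1).mul hgwK.1)) (hgwK.abs.const_mul _)
      (fun n => Eventually.of_forall fun x => ?_) (Eventually.of_forall fun x => ?_)
    · rw [norm_mul, norm_mul, norm_mul]
      refine mul_le_mul (mul_le_mul (hB x) (hP x) (norm_nonneg _) hB0) ?_ (by positivity)
        (mul_nonneg hB0 hP0)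
      exact mul_le_of_le_one_left (norm_nonneg _) (abs_deriv_truncate_le (by positivity) _)
    · simpa using ((tendsto_deriv_truncate (w x)).mul_const ⟪gw x, v⟫).const_mul (f x * p x)
  have L3 : Tendsto (fun n : ℕ => ∫ x in K, (truncate ((n : ℝ) + 1) (w x) * p x) * ⟪gf x, v⟫)
      atTop (𝓝 (∫ x in K, (w x * p x) * ⟪gf x, v⟫)) := by
    refine tendsto_integral_of_dominated_convergence (fun x => P * |w x * ⟪gf x, v⟫|)
      (fun n => ((tm n).mul hp.continuous.aestronglyMeasurable).mul hgfK.1)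
      (hwgfK.abs.const_mul _)
      (fun n => Eventually.of_forall fun x => ?_) (Eventually.of_forall fun x => ?_)
    · rw [norm_mul, norm_mul, abs_mul, mul_comm (‖truncate _ _‖), mul_assoc]
      exact mul_le_mul (hP x) (mul_le_mul_of_nonneg_right
        (abs_truncate_le_abs (by positivity) _) (norm_nonneg _)) (by positivity) hP0
    · exact ((tendsto_truncate (w x)).mul_const _).mul_const _
  have key := tendsto_nhds_unique L1 ((L2.neg.sub L3).congr fun n => (id0 n).symm)
  have e1 : ∫ x in K, w x * f x * fderiv ℝ p x v = ∫ x in K, (f x * fderiv ℝ p x v) * w x := by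
    congr 1
    ext x
    ring
  rw [e1, key, ← neg_add', ← integral_add]
  · congr 2
    ext x
    rw [inner_add_left, real_inner_smul_left, real_inner_smul_left]
    ring
  · exact hgwK.bdd_mul (c := B * P) (hfK.mul hp.continuous.aestronglyMeasurable)
      (Eventually.of_forall fun x => by
        rw [norm_mul]
        exact mul_le_mul (hB x) (hP x) (norm_nonneg _) hB0)
  · have := hwgfK.bdd_mul (c := P) (hp.continuous.aestronglyMeasurable (μ := volume.restrict K))
      (Eventually.of_forall fun x => hP x)
    refine this.congr (Eventually.of_forall fun x => ?_)
    dsimp only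
    ring

theorem sq_lintegral_le {α : Type*} [MeasurableSpace α] (ν : Measure α) {h : α → ℝ≥0∞}
    (hh : AEMeasurable h ν) : (∫⁻ x, h x ∂ν) ^ 2 ≤ ν univ * ∫⁻ x, h x ^ 2 ∂ν := by
  have h1 := ENNReal.lintegral_mul_le_Lp_mul_Lq ν Real.HolderConjugate.two_two hh
    (aemeasurable_const (b := (1 : ℝ≥0∞)))
  simp only [Pi.mul_apply, mul_one, one_pow, lintegral_const, one_mul,
    ENNReal.rpow_two] at h1
  calc (∫⁻ x, h x ∂ν) ^ 2
      ≤ ((∫⁻ x, h x ^ 2 ∂ν) ^ (1 / (2 : ℝ)) * ν univ ^ (1 / (2 : ℝ))) ^ 2 := by gcongr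
    _ = ν univ * ∫⁻ x, h x ^ 2 ∂ν := by
      rw [mul_pow, ← ENNReal.rpow_two, ← ENNReal.rpow_two, ← ENNReal.rpow_mul, ← ENNReal.rpow_mul]
      norm_num
      rw [mul_comm]

theorem add_sq_le_two_mul (a b : ℝ≥0∞) : (a + b) ^ 2 ≤ 2 * (a ^ 2 + b ^ 2) := by
  have := ENNReal.rpow_add_le_mul_rpow_add_rpow a b one_le_two
  norm_num at this
  exact this

theorem lintegral_comp_affine_le (h : Euc d → ℝ≥0∞) (a : Euc d) {l : ℝ} (hl : 1 / 2 ≤ l) :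
    ∫⁻ x, h (a + l • x) ≤ 2 ^ d * ∫⁻ x, h x := by
  have hl0 : 0 < l := by linarith
  rw [lintegral_comp_affine h a hl0.ne']
  gcongr
  rw [abs_of_nonneg (by positivity), ← inv_pow,
    ENNReal.ofReal_pow (by positivity)]
  gcongr
  rw [show (2 : ℝ≥0∞) = ENNReal.ofReal 2 by simp]
  refine ENNReal.ofReal_le_ofReal ?_
  rw [inv_le_comm₀ hl0 two_pos]
  linarith

theorem ae_comp_affine {P : Euc d → Prop} (hP : ∀ᵐ x, P x) (a : Euc d) {l : ℝ} (hl : 1 / 2 ≤ l) :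
    ∀ᵐ x, P (a + l • x) := by
  obtain ⟨N, hN, hNm, hN0⟩ := exists_measurable_superset_of_null (ae_iff.1 hP)
  rw [ae_iff]
  refine measure_mono_null (t := (fun x => a + l • x) ⁻¹' N) (fun x hx => hN hx) ?_
  have h1 := lintegral_comp_affine_le (N.indicator 1) a hl
  have hm : Measurable fun x : Euc d => a + l • x := by fun_prop
  have h2 : ∀ x, N.indicator (1 : Euc d → ℝ≥0∞) (a + l • x) =
      ((fun x => a + l • x) ⁻¹' N).indicator 1 x := fun x => rfl
  simp_rw [h2] at h1
  rw [lintegral_indicator_one hNm, lintegral_indicator_one (hm hNm), hN0, mul_zero] at h1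
  exact le_antisymm h1 zero_le

/-- A slight contraction towards `x₀`, by the factor `1 - ε * c`. -/
def contract (x₀ : Euc d) (c ε : ℝ) (x : Euc d) : Euc d := x + (ε * c) • (x₀ - x)

/-- The open convex set `O` is at most of size `2 / c` around `x₀`, and `contract x₀ c ε` moves it
away from its complement by more than `ε`. -/
structure Shrinkable (O : Set (Euc d)) (x₀ : Euc d) (c ε₀ : ℝ) : Prop where
  isOpen : IsOpen O
  convex : Convex ℝ O
  c_nonneg : 0 ≤ c
  pos : 0 < ε₀
  le_half : c * ε₀ ≤ 1 / 2
  dist_le : ∀ x ∈ O, c * ‖x₀ - x‖ ≤ 2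
  closedBall_subset : ∀ x ∈ O, ∀ ε, 0 < ε → ε ≤ ε₀ →
    Metric.closedBall (contract x₀ c ε x) ε ⊆ O

theorem shrinkable_univ : Shrinkable (univ : Set (Euc d)) 0 0 1 where
  isOpen := isOpen_univ
  convex := convex_univ
  c_nonneg := le_rfl
  pos := one_pos
  le_half := by norm_num
  dist_le _ _ := by simp
  closedBall_subset _ _ _ _ _ := subset_univ _

theorem shrinkable_ball (x₀ : Euc d) {r : ℝ} (hr : 0 < r) :
    Shrinkable (Metric.ball x₀ r) x₀ (2 / r) (r / 4) where
  isOpen := Metric.isOpen_ball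
  convex := convex_ball _ _
  c_nonneg := by positivity
  pos := by positivity
  le_half := by field_simp; norm_num
  dist_le x hx := by
    rw [← dist_eq_norm, dist_comm, div_mul_eq_mul_div, div_le_iff₀ hr]
    have := Metric.mem_ball.1 hx
    linarith
  closedBall_subset x hx ε hε hε' y hy := by
    rw [Metric.mem_ball, dist_eq_norm] at hx ⊢
    rw [Metric.mem_closedBall, dist_eq_norm, contract] at hy
    have hl : 0 ≤ 1 - ε * (2 / r) := by
      rw [sub_nonneg, ← mul_div_assoc, div_le_one hr]
      linarith
    have h1 : y - x₀ = (y - (x + (ε * (2 / r)) • (x₀ - x))) + (1 - ε * (2 / r)) • (x - x₀) := by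
      module
    rw [h1]
    refine (norm_add_le _ _).trans_lt ?_
    rw [norm_smul, Real.norm_of_nonneg hl]
    have h2 := mul_le_mul_of_nonneg_left hx.le hl
    have h3 : (1 - ε * (2 / r)) * r = r - 2 * ε := by field_simp
    linarith

namespace Shrinkable

variable {O : Set (Euc d)} {x₀ : Euc d} {c ε₀ : ℝ}

theorem mul_le (hs : Shrinkable O x₀ c ε₀) {ε : ℝ} (hε' : ε ≤ ε₀) : ε * c ≤ 1 / 2 :=
  (mul_comm ε c ▸ mul_le_mul_of_nonneg_left hε' hs.c_nonneg).trans hs.le_half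

theorem half_le (hs : Shrinkable O x₀ c ε₀) {ε : ℝ} (hε' : ε ≤ ε₀) : 1 / 2 ≤ 1 - ε * c := by
  linarith [hs.mul_le hε']

theorem contract_sub_eq (x₀ : Euc d) (c ε : ℝ) (z x : Euc d) :
    contract x₀ c ε x - ε • z = ((ε * c) • x₀ - ε • z) + (1 - ε * c) • x := by
  rw [contract]
  module

theorem mem (hs : Shrinkable O x₀ c ε₀) {x : Euc d} (hx : x ∈ O) {ε : ℝ} (hε : 0 < ε)
    (hε' : ε ≤ ε₀) {z : Euc d} (hz : z ∈ Metric.closedBall 0 1) :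
    contract x₀ c ε x - ε • z ∈ O := by
  refine hs.closedBall_subset x hx ε hε hε' ?_
  rw [mem_closedBall_zero_iff] at hz
  rw [Metric.mem_closedBall, dist_eq_norm, sub_sub_cancel_left, norm_neg, norm_smul,
    Real.norm_of_nonneg hε.le]
  exact mul_le_of_le_one_right hε.le hz

theorem norm_contract_sub_le (hs : Shrinkable O x₀ c ε₀) {x : Euc d} (hx : x ∈ O) {ε : ℝ}
    (hε : 0 < ε) : ‖contract x₀ c ε x - x‖ ≤ 2 * ε := by
  rw [contract, add_sub_cancel_left, norm_smul, norm_mul, Real.norm_of_nonneg hε.le,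
    Real.norm_of_nonneg hs.c_nonneg, mul_assoc, mul_comm 2]
  exact mul_le_mul_of_nonneg_left (hs.dist_le x hx) hε.le

theorem norm_sub_le (hs : Shrinkable O x₀ c ε₀) {x : Euc d} (hx : x ∈ O) {ε : ℝ} (hε : 0 < ε)
    {z : Euc d} (hz : z ∈ Metric.closedBall 0 1) :
    ‖contract x₀ c ε x - ε • z - x‖ ≤ 3 * ε := by
  rw [mem_closedBall_zero_iff] at hz
  rw [sub_right_comm]
  refine (_root_.norm_sub_le _ _).trans ?_
  rw [norm_smul, Real.norm_of_nonneg hε.le]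
  linarith [hs.norm_contract_sub_le hx hε, mul_le_of_le_one_right hε.le hz]

theorem tendsto_mollify_contract (hs : Shrinkable O x₀ c ε₀) {g : Euc d → ℝ}
    (hg : LocallyIntegrable (O.indicator g)) {ε : ℕ → ℝ} (hε : Tendsto ε atTop (𝓝[>] 0)) :
    ∀ᵐ x, x ∈ O →
      Tendsto (fun n => mollify (O.indicator g) (ε n) (contract x₀ c (ε n) x)) atTop (𝓝 (g x)) := by
  filter_upwards [ae_tendsto_mollify hg 2] with x hx hxO
  have := hx (fun n => contract x₀ c (ε n) x) ε hε ?_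
  · rwa [indicator_of_mem hxO] at this
  · filter_upwards [hε.eventually self_mem_nhdsWithin] with n hn
    rw [Metric.mem_closedBall, dist_eq_norm, norm_sub_rev]
    exact hs.norm_contract_sub_le hxO hn

theorem lintegral_average_sq_le (hs : Shrinkable O x₀ c ε₀) {ε : ℝ} (hε : 0 < ε) (hε' : ε ≤ ε₀)
    {H : Euc d → ℝ≥0∞} (hH : AEMeasurable H) :
    ∫⁻ x, (∫⁻ z in Metric.closedBall 0 1, H (contract x₀ c ε x - ε • z)) ^ 2 ≤
      volume (Metric.closedBall (0 : Euc d) 1) ^ 2 * 2 ^ d * ∫⁻ x, H x ^ 2 := by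
  set κ := volume (Metric.closedBall (0 : Euc d) 1)
  have hmk : ∀ x, ∫⁻ z in Metric.closedBall 0 1, H (contract x₀ c ε x - ε • z) =
      ∫⁻ z in Metric.closedBall 0 1, hH.mk H (contract x₀ c ε x - ε • z) := fun x => by
    rw [lintegral_closedBall_eq H _ hε, lintegral_closedBall_eq (hH.mk H) _ hε]
    congr 1
    exact lintegral_congr_ae (ae_restrict_of_ae hH.ae_eq_mk)
  have hmk2 : ∫⁻ x, H x ^ 2 = ∫⁻ x, hH.mk H x ^ 2 :=
    lintegral_congr_ae (hH.ae_eq_mk.mono fun x hx => by dsimp only; rw [hx])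
  simp_rw [hmk, hmk2]
  have hm := hH.measurable_mk
  have hc : Measurable fun p : Euc d × Euc d => contract x₀ c ε p.1 - ε • p.2 := by
    unfold contract
    fun_prop
  calc ∫⁻ x, (∫⁻ z in Metric.closedBall 0 1, hH.mk H (contract x₀ c ε x - ε • z)) ^ 2
      ≤ ∫⁻ x, κ * ∫⁻ z in Metric.closedBall 0 1, hH.mk H (contract x₀ c ε x - ε • z) ^ 2 := by
        refine lintegral_mono fun x => ?_
        refine (sq_lintegral_le _ (hm.comp (hc.comp measurable_prodMk_left)).aemeasurable).trans ?_
        rw [Measure.restrict_apply_univ]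
        rfl
    _ = κ * ∫⁻ z in Metric.closedBall 0 1, ∫⁻ x, hH.mk H (contract x₀ c ε x - ε • z) ^ 2 := by
        rw [lintegral_const_mul' _ _ measure_closedBall_lt_top.ne, lintegral_lintegral_swap]
        exact ((hm.comp hc).pow_const 2).aemeasurable
    _ ≤ κ * ∫⁻ z in Metric.closedBall (0 : Euc d) 1, 2 ^ d * ∫⁻ x, hH.mk H x ^ 2 := by
        gcongr with z
        simp_rw [contract_sub_eq]
        exact lintegral_comp_affine_le (fun x => hH.mk H x ^ 2) _ (hs.half_le hε')
    _ = κ ^ 2 * 2 ^ d * ∫⁻ x, hH.mk H x ^ 2 := by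
        rw [setLIntegral_const]
        ring

theorem lintegral_sub_sq_le_of_contDiff (hs : Shrinkable O x₀ c ε₀) {ε : ℝ} (hε : 0 < ε)
    (hε' : ε ≤ ε₀) {u : Euc d → ℝ} (hu : ContDiff ℝ ∞ u) {z : Euc d}
    (hz : z ∈ Metric.closedBall 0 1) :
    ∫⁻ x in O, ‖u x - u (contract x₀ c ε x - ε • z)‖ₑ ^ 2 ≤
      ENNReal.ofReal (3 * ε) ^ 2 * 2 ^ d * ∫⁻ x in O, ‖fderiv ℝ u x‖ₑ ^ 2 := by
  set T : Euc d → Euc d := fun x => contract x₀ c ε x - ε • z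
  have hT : Continuous T := by
    simp only [T]
    unfold contract
    fun_prop
  have hdu : Continuous (fderiv ℝ u) := hu.continuous_fderiv (by simp)
  have hpt : ∀ x ∈ O, ‖u x - u (T x)‖ₑ ^ 2 ≤ ENNReal.ofReal (3 * ε) ^ 2 *
      ∫⁻ s in Icc (0 : ℝ) 1, ‖fderiv ℝ u (x + s • (T x - x))‖ₑ ^ 2 := fun x hx => by
    have hc1 : Continuous fun s : ℝ => fderiv ℝ u (x + s • (T x - x)) := by fun_prop
    have hI : ∫ s in (0 : ℝ)..1, fderiv ℝ u (x + s • (T x - x)) (T x - x) = u (T x) - u x := by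
      have := intervalIntegral.integral_eq_sub_of_hasDerivAt
        (f := fun s : ℝ => u (x + s • (T x - x))) (a := 0) (b := 1)
        (f' := fun s => fderiv ℝ u (x + s • (T x - x)) (T x - x)) (fun s _ => ?_)
        ((hc1.clm_apply continuous_const).intervalIntegrable _ _)
      · simpa using this
      · have h1 : HasDerivAt (fun s : ℝ => x + s • (T x - x)) (T x - x) s := by
          simpa using ((hasDerivAt_id s).smul_const (T x - x)).const_add x
        exact ((hu.differentiable (by simp) _).hasFDerivAt).comp_hasDerivAt s h1
    have h2 : ‖u x - u (T x)‖ₑ ≤ ENNReal.ofReal (3 * ε) *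
        ∫⁻ s in Icc (0 : ℝ) 1, ‖fderiv ℝ u (x + s • (T x - x))‖ₑ := by
      rw [← enorm_neg, neg_sub, ← hI, intervalIntegral.integral_of_le zero_le_one,
        ← lintegral_const_mul' _ _ ENNReal.ofReal_ne_top]
      refine (enorm_integral_le_lintegral_enorm _).trans ?_
      refine (lintegral_mono fun s => ?_).trans (lintegral_mono_set Ioc_subset_Icc_self)
      refine (ContinuousLinearMap.le_opENorm _ _).trans ?_
      rw [mul_comm]
      gcongr
      rw [← ofReal_norm]
      exact ENNReal.ofReal_le_ofReal (hs.norm_sub_le hx hε hz)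
    calc ‖u x - u (T x)‖ₑ ^ 2 ≤ (ENNReal.ofReal (3 * ε) *
        ∫⁻ s in Icc (0 : ℝ) 1, ‖fderiv ℝ u (x + s • (T x - x))‖ₑ) ^ 2 := by gcongr
      _ ≤ _ := by
        rw [mul_pow]
        gcongr
        refine (sq_lintegral_le _ hc1.enorm.measurable.aemeasurable).trans ?_
        simp
  have hmeas : Measurable fun p : Euc d × ℝ => ‖fderiv ℝ u (p.1 + p.2 • (T p.1 - p.1))‖ₑ ^ 2 := by
    refine Measurable.pow_const (Continuous.measurable ?_) 2
    fun_prop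
  calc ∫⁻ x in O, ‖u x - u (T x)‖ₑ ^ 2
      ≤ ∫⁻ x in O, ENNReal.ofReal (3 * ε) ^ 2 *
          ∫⁻ s in Icc (0 : ℝ) 1, ‖fderiv ℝ u (x + s • (T x - x))‖ₑ ^ 2 :=
        setLIntegral_mono' hs.isOpen.measurableSet hpt
    _ = ENNReal.ofReal (3 * ε) ^ 2 *
          ∫⁻ s in Icc (0 : ℝ) 1, ∫⁻ x in O, ‖fderiv ℝ u (x + s • (T x - x))‖ₑ ^ 2 := by
        rw [lintegral_const_mul' _ _ (ENNReal.pow_ne_top ENNReal.ofReal_ne_top), lintegral_lintegral_swap]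
        exact hmeas.aemeasurable
    _ ≤ ENNReal.ofReal (3 * ε) ^ 2 *
          ∫⁻ s in Icc (0 : ℝ) 1, 2 ^ d * ∫⁻ x in O, ‖fderiv ℝ u x‖ₑ ^ 2 := by
        gcongr 1
        refine setLIntegral_mono' measurableSet_Icc fun s hs' => ?_
        have e : ∀ x, x + s • (T x - x) =
            (s • ((ε * c) • x₀ - ε • z)) + (1 - s * (ε * c)) • x := fun x => by
          simp only [T, contract]
          module
        have hl : 1 / 2 ≤ 1 - s * (ε * c) := by
          have := mul_le_of_le_one_left (mul_nonneg hε.le hs.c_nonneg) hs'.2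
          linarith [hs.mul_le hε']
        refine le_trans ?_ ((lintegral_comp_affine_le
          (O.indicator fun x => ‖fderiv ℝ u x‖ₑ ^ 2) (s • ((ε * c) • x₀ - ε • z)) hl).trans_eq ?_)
        · rw [← lintegral_indicator hs.isOpen.measurableSet]
          refine lintegral_mono fun x => ?_
          by_cases hx : x ∈ O
          · have hm : x + s • (T x - x) ∈ O :=
              hs.convex.add_smul_sub_mem hx (hs.mem hx hε hε' hz) hs'
            rw [← e, indicator_of_mem hx, indicator_of_mem hm]
          · rw [indicator_of_notMem hx]
            exact zero_le
        · rw [lintegral_indicator hs.isOpen.measurableSet]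
    _ = _ := by
        rw [setLIntegral_const]
        simp [mul_assoc]

end Shrinkable

theorem exists_seq_tendsto_pos {r : ℝ} (hr : 0 < r) :
    ∃ ε : ℕ → ℝ, (∀ n, 0 < ε n) ∧ (∀ n, ε n ≤ r) ∧ Tendsto ε atTop (𝓝[>] 0) := by
  have hpos : ∀ n : ℕ, 0 < r * (1 / ((n : ℝ) + 1)) := fun n => by positivity
  refine ⟨fun n => r * (1 / ((n : ℝ) + 1)), hpos, fun n => ?_,
    tendsto_nhdsWithin_iff.2 ⟨?_, Eventually.of_forall hpos⟩⟩
  · refine mul_le_of_le_one_right hr.le ?_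
    rw [div_le_one (by positivity)]
    linarith [n.cast_nonneg (α := ℝ)]
  · simpa only [mul_zero] using (tendsto_one_div_add_atTop_nhds_zero_nat (𝕜 := ℝ)).const_mul r

theorem lintegral_le_of_tendsto_of_le {α : Type*} [MeasurableSpace α] {μ : Measure α}
    {F : ℕ → α → ℝ≥0∞} {F' : α → ℝ≥0∞} {M : ℝ≥0∞} (hF : ∀ n, AEMeasurable (F n) μ)
    (hlim : ∀ᵐ x ∂μ, Tendsto (fun n => F n x) atTop (𝓝 (F' x))) (hM : ∀ n, ∫⁻ x, F n x ∂μ ≤ M) :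
    ∫⁻ x, F' x ∂μ ≤ M := by
  calc ∫⁻ x, F' x ∂μ = ∫⁻ x, liminf (fun n => F n x) atTop ∂μ :=
        lintegral_congr_ae (hlim.mono fun x hx => hx.liminf_eq.symm)
    _ ≤ liminf (fun n => ∫⁻ x, F n x ∂μ) atTop := lintegral_liminf_le' hF
    _ ≤ M := liminf_le_of_frequently_le' (Frequently.of_forall hM)

theorem integrable_mul_fderiv_moll {g : Euc d → ℝ} (hg : LocallyIntegrable g) {ε : ℝ} (hε : 0 < ε)
    (a v : Euc d) : Integrable fun y => g y * fderiv ℝ (moll ε) (a - y) v :=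
  ((hasCompactSupport_moll hε).fderiv_apply (𝕜 := ℝ) v).convolutionExists_right
    (ContinuousLinearMap.mul ℝ ℝ) hg
    (((contDiff_moll ε).continuous_fderiv (by simp)).clm_apply continuous_const) a

/-- Smooth approximation of a function on `O` by mollification and a slight dilation. -/
noncomputable def smoothApprox (O : Set (Euc d)) (x₀ : Euc d) (c : ℝ) (f : Euc d → ℝ) (ε : ℝ)
    (x : Euc d) : ℝ :=
  mollify (O.indicator f) ε (contract x₀ c ε x)

section

variable {O : Set (Euc d)} {x₀ : Euc d} {c ε₀ : ℝ}

theorem contDiff_contract (x₀ : Euc d) (c ε : ℝ) : ContDiff ℝ ∞ (contract x₀ c ε) := by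
  unfold contract
  fun_prop

theorem contDiff_smoothApprox {f : Euc d → ℝ} (hf : LocallyIntegrable (O.indicator f)) {ε : ℝ}
    (hε : 0 < ε) : ContDiff ℝ ∞ (smoothApprox O x₀ c f ε) :=
  (contDiff_mollify hf hε).comp (contDiff_contract x₀ c ε)

theorem fderiv_smoothApprox {f : Euc d → ℝ} (hf : LocallyIntegrable (O.indicator f)) {ε : ℝ}
    (hε : 0 < ε) (x v : Euc d) :
    fderiv ℝ (smoothApprox O x₀ c f ε) x v =
      (1 - ε * c) * ∫ y, O.indicator f y * fderiv ℝ (moll ε) (contract x₀ c ε x - y) v := by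
  have h1 : HasFDerivAt (contract x₀ c ε) ((1 - ε * c) • ContinuousLinearMap.id ℝ (Euc d)) x := by
    have e : contract x₀ c ε = fun x => (ε * c) • x₀ + (1 - ε * c) • x := by
      ext1 x
      rw [contract]
      module
    rw [e]
    exact ((hasFDerivAt_id x).const_smul (1 - ε * c)).const_add _
  have h2 := ((contDiff_mollify hf hε).differentiable (by simp)
    (contract x₀ c ε x)).hasFDerivAt.comp x h1
  have h3 : fderiv ℝ (smoothApprox O x₀ c f ε) x = _ := h2.fderiv
  rw [h3, ← fderiv_mollify hf hε]
  simp

theorem enorm_one_sub_mul_le (hs : Shrinkable O x₀ c ε₀) {ε : ℝ} (hε : 0 < ε) (hε' : ε ≤ ε₀) :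
    ‖1 - ε * c‖ₑ ≤ 1 := by
  have h1 := hs.half_le hε'
  have h2 := mul_nonneg hε.le hs.c_nonneg
  rw [Real.enorm_eq_ofReal (by linarith)]
  exact ENNReal.ofReal_le_one.2 (by linarith)

theorem enorm_mollify_inner_le {C : ℝ} (hC : ∀ ε > 0, ∀ z : Euc d, |moll ε z| ≤ C * (ε⁻¹) ^ d)
    (g : Euc d → Euc d) {ε : ℝ} (hε : 0 < ε) (a v : Euc d) :
    ‖mollify (O.indicator fun y => ⟪g y, v⟫) ε a‖ₑ ≤
      ENNReal.ofReal C * (∫⁻ z in Metric.closedBall 0 1, ‖O.indicator g (a - ε • z)‖ₑ) * ‖v‖ₑ := by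
  refine (enorm_integral_mul_kernel_le hε (hC ε hε) (fun z => moll_eq_zero hε) _ a).trans ?_
  rw [mul_assoc, ← lintegral_mul_const' _ _ enorm_ne_top]
  gcongr with z
  by_cases hz : a - ε • z ∈ O
  · rw [indicator_of_mem hz, indicator_of_mem hz]
    rw [← ofReal_norm, ← ofReal_norm, ← ofReal_norm, ← ENNReal.ofReal_mul (norm_nonneg _)]
    exact ENNReal.ofReal_le_ofReal (norm_inner_le_norm _ _)
  · simp [indicator_of_notMem hz]

theorem aemeasurable_enorm_indicator (hO : MeasurableSet O) {g : Euc d → Euc d}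
    (hg : LocallyIntegrableOn g O) : AEMeasurable fun x => ‖O.indicator g x‖ₑ :=
  (aestronglyMeasurable_indicator_iff hO |>.2 hg.aestronglyMeasurable).enorm

theorem lintegral_enorm_indicator_sq (hO : MeasurableSet O) (g : Euc d → Euc d) :
    ∫⁻ x, ‖O.indicator g x‖ₑ ^ 2 = ∫⁻ x in O, ‖g x‖ₑ ^ 2 := by
  rw [← lintegral_indicator hO]
  refine lintegral_congr fun x => ?_
  by_cases hx : x ∈ O <;> simp [hx]

theorem lintegral_fderiv_smoothApprox_sq_le (hs : Shrinkable O x₀ c ε₀) {C : ℝ}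
    (hC : ∀ ε > 0, ∀ z : Euc d, |moll ε z| ≤ C * (ε⁻¹) ^ d) {f : Euc d → ℝ} {gf : Euc d → Euc d}
    (h : HasWeakGradOn O f gf) (hf : LocallyIntegrable (O.indicator f)) {ε : ℝ} (hε : 0 < ε)
    (hε' : ε ≤ ε₀) :
    ∫⁻ x in O, ‖fderiv ℝ (smoothApprox O x₀ c f ε) x‖ₑ ^ 2 ≤
      ENNReal.ofReal C ^ 2 * (volume (Metric.closedBall (0 : Euc d) 1) ^ 2 * 2 ^ d *
        ∫⁻ x in O, ‖gf x‖ₑ ^ 2) := by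
  have hO := hs.isOpen.measurableSet
  rw [← lintegral_enorm_indicator_sq hO]
  refine le_trans ?_ (mul_le_mul_right (hs.lintegral_average_sq_le hε hε'
    (aemeasurable_enorm_indicator hO h.2.1)) _)
  rw [← lintegral_const_mul' _ _ (ENNReal.pow_ne_top ENNReal.ofReal_ne_top)]
  refine (setLIntegral_mono' hO fun x hx => ?_).trans (setLIntegral_le_lintegral _ _)
  rw [← mul_pow]
  gcongr
  refine ContinuousLinearMap.opENorm_le_bound _ fun v => ?_
  rw [fderiv_smoothApprox hf hε, h.integral_fderiv_moll hO subset_rfl hε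
    (hs.closedBall_subset x hx ε hε hε'), enorm_mul]
  exact (mul_le_of_le_one_left' (enorm_one_sub_mul_le hs hε hε')).trans
    (enorm_mollify_inner_le hC gf hε _ v)

theorem lintegral_sub_sq_le (hs : Shrinkable O x₀ c ε₀) {C : ℝ}
    (hC : ∀ ε > 0, ∀ z : Euc d, |moll ε z| ≤ C * (ε⁻¹) ^ d) {w : Euc d → ℝ} {gw : Euc d → Euc d}
    (h : HasWeakGradOn O w gw) (hw : LocallyIntegrable (O.indicator w)) {ε : ℝ} (hε : 0 < ε)
    (hε' : ε ≤ ε₀) {z : Euc d} (hz : z ∈ Metric.closedBall 0 1) :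
    ∫⁻ x in O, ‖w x - w (contract x₀ c ε x - ε • z)‖ₑ ^ 2 ≤
      ENNReal.ofReal (3 * ε) ^ 2 * 2 ^ d * (ENNReal.ofReal C ^ 2 *
        (volume (Metric.closedBall (0 : Euc d) 1) ^ 2 * 2 ^ d * ∫⁻ x in O, ‖gw x‖ₑ ^ 2)) := by
  obtain ⟨δ, hδ, hδ', hδt⟩ := exists_seq_tendsto_pos hs.pos
  have hsm : ∀ n, ContDiff ℝ ∞ (smoothApprox O x₀ c w (δ n)) := fun n =>
    contDiff_smoothApprox hw (hδ n)
  have hlim := hs.tendsto_mollify_contract hw hδt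
  have hlim' := ae_comp_affine hlim ((ε * c) • x₀ - ε • z) (hs.half_le hε')
  refine lintegral_le_of_tendsto_of_le
    (F := fun n x => ‖smoothApprox O x₀ c w (δ n) x -
      smoothApprox O x₀ c w (δ n) (contract x₀ c ε x - ε • z)‖ₑ ^ 2) (fun n => ?_) ?_ fun n => ?_
  · have h1 := (hsm n).continuous
    have h2 := (contDiff_contract x₀ c ε).continuous
    exact (Continuous.measurable (by fun_prop)).enorm.pow_const 2 |>.aemeasurable
  · refine (ae_restrict_iff' hs.isOpen.measurableSet).2 ?_
    filter_upwards [hlim, hlim'] with x h1 h2 hx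
    rw [← Shrinkable.contract_sub_eq] at h2
    exact ((ENNReal.continuous_pow 2).tendsto _).comp
      ((h1 hx).sub (h2 (hs.mem hx hε hε' hz))).enorm
  · refine (hs.lintegral_sub_sq_le_of_contDiff hε hε' (hsm n) hz).trans ?_
    gcongr
    exact lintegral_fderiv_smoothApprox_sq_le hs hC h hw (hδ n) (hδ' n)

theorem enorm_smul_fderiv_smoothApprox_le (hs : Shrinkable O x₀ c ε₀) {C B : ℝ} (hB0 : 0 ≤ B)
    (hC : ∀ ε > 0, ∀ z : Euc d, |moll ε z| ≤ C * (ε⁻¹) ^ d ∧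
      ‖fderiv ℝ (moll ε) z‖ ≤ C * ε⁻¹ * (ε⁻¹) ^ d) {w f : Euc d → ℝ} {gu : Euc d → Euc d}
    (hf : LocallyIntegrable (O.indicator f)) (hB : ∀ x, |f x| ≤ B)
    (hu : HasWeakGradOn O (fun x => w x * f x) gu)
    (hul : LocallyIntegrable (O.indicator fun x => w x * f x)) {ε : ℝ} (hε : 0 < ε)
    (hε' : ε ≤ ε₀) {x : Euc d} (hx : x ∈ O) :
    ‖w x • fderiv ℝ (smoothApprox O x₀ c f ε) x‖ₑ ≤
      ENNReal.ofReal (C * ε⁻¹ * B) *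
        (∫⁻ z in Metric.closedBall 0 1, ‖w x - w (contract x₀ c ε x - ε • z)‖ₑ) +
      ENNReal.ofReal C *
        ∫⁻ z in Metric.closedBall 0 1, ‖O.indicator gu (contract x₀ c ε x - ε • z)‖ₑ := by
  have hO := hs.isOpen.measurableSet
  refine ContinuousLinearMap.opENorm_le_bound _ fun v => ?_
  set a := contract x₀ c ε x
  have hC0 : 0 ≤ C * ε⁻¹ := by
    have := (norm_nonneg _).trans (hC ε hε 0).2
    exact nonneg_of_mul_nonneg_left this (by positivity)
  have i1 := integrable_mul_fderiv_moll hf hε a v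
  have i2 := integrable_mul_fderiv_moll hul hε a v
  have hwu : ∀ y, (O.indicator fun x => w x * f x) y = w y * O.indicator f y := fun y => by
    by_cases hy : y ∈ O <;> simp [hy]
  have split : w x * ∫ y, O.indicator f y * fderiv ℝ (moll ε) (a - y) v =
      (∫ y, ((w x - w y) * O.indicator f y) * fderiv ℝ (moll ε) (a - y) v) +
        mollify (O.indicator fun y => ⟪gu y, v⟫) ε a := by
    rw [← hu.integral_fderiv_moll hO subset_rfl hε (hs.closedBall_subset x hx ε hε hε') v,
      ← integral_const_mul, ← sub_eq_iff_eq_add, ← integral_sub (i1.const_mul _) i2]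
    congr 1
    ext y
    rw [hwu]
    ring
  have hk : ∀ z, |fderiv ℝ (moll ε) z v| ≤ (C * ε⁻¹ * ‖v‖) * (ε⁻¹) ^ d := fun z => by
    refine ((fderiv ℝ (moll ε) z).le_opNorm v).trans ?_
    refine (mul_le_mul_of_nonneg_right (hC ε hε z).2 (norm_nonneg v)).trans_eq ?_
    ring
  have hk0 : ∀ z ∉ Metric.closedBall 0 ε, fderiv ℝ (moll ε) z v = 0 := fun z hz => by
    rw [fderiv_moll_eq_zero hε hz]
    rfl
  have e1 : ‖∫ y, ((w x - w y) * O.indicator f y) * fderiv ℝ (moll ε) (a - y) v‖ₑ ≤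
      ENNReal.ofReal (C * ε⁻¹ * B) *
        (∫⁻ z in Metric.closedBall 0 1, ‖w x - w (a - ε • z)‖ₑ) * ‖v‖ₑ := by
    refine (enorm_integral_mul_kernel_le hε hk hk0 _ a).trans ?_
    rw [ENNReal.ofReal_mul hC0, ofReal_norm, ENNReal.ofReal_mul hC0, mul_right_comm,
      mul_assoc (ENNReal.ofReal (C * ε⁻¹)) (ENNReal.ofReal B),
      ← lintegral_const_mul' (ENNReal.ofReal B) _ ENNReal.ofReal_ne_top]
    gcongr with z
    rw [enorm_mul, mul_comm]
    gcongr
    rw [Real.enorm_eq_ofReal_abs]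
    refine ENNReal.ofReal_le_ofReal ?_
    by_cases hy : a - ε • z ∈ O
    · rw [indicator_of_mem hy]
      exact hB _
    · rw [indicator_of_notMem hy, abs_zero]
      exact hB0
  rw [smul_apply, smul_eq_mul, fderiv_smoothApprox hf hε, mul_left_comm,
    split, enorm_mul, add_mul]
  refine (mul_le_of_le_one_left' (enorm_one_sub_mul_le hs hε hε')).trans ?_
  refine (enorm_add_le _ _).trans ?_
  exact add_le_add e1 (enorm_mollify_inner_le (fun ε hε z => (hC ε hε z).1) gu hε a v)

theorem exists_bound_lintegral_smul_fderiv (hs : Shrinkable O x₀ c ε₀) {w f : Euc d → ℝ}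
    {gw gu : Euc d → Euc d} {B : ℝ} (hwm : Measurable w) (hB : ∀ x, |f x| ≤ B)
    (hf : LocallyIntegrable (O.indicator f)) (hw : HasWeakGradOn O w gw)
    (hwl : LocallyIntegrable (O.indicator w)) (hu : HasWeakGradOn O (fun x => w x * f x) gu)
    (hul : LocallyIntegrable (O.indicator fun x => w x * f x))
    (hgw : ∫⁻ x in O, ‖gw x‖ₑ ^ 2 ≠ ⊤) (hgu : ∫⁻ x in O, ‖gu x‖ₑ ^ 2 ≠ ⊤) :
    ∃ M : ℝ≥0∞, M ≠ ⊤ ∧ ∀ ε, 0 < ε → ε ≤ ε₀ →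
      ∫⁻ x in O, ‖w x • fderiv ℝ (smoothApprox O x₀ c f ε) x‖ₑ ^ 2 ≤ M := by
  obtain ⟨C, hC0, hC⟩ := exists_moll_bound d
  have hB0 : 0 ≤ B := (abs_nonneg _).trans (hB 0)
  have hO := hs.isOpen.measurableSet
  set κ := volume (Metric.closedBall (0 : Euc d) 1)
  have hκ : κ ≠ ⊤ := measure_closedBall_lt_top.ne
  set P := 2 ^ d * (ENNReal.ofReal C ^ 2 * (κ ^ 2 * 2 ^ d * ∫⁻ x in O, ‖gw x‖ₑ ^ 2))
  refine ⟨2 * (ENNReal.ofReal (3 * C * B) ^ 2 * κ ^ 2 * P +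
    ENNReal.ofReal C ^ 2 * (κ ^ 2 * 2 ^ d * ∫⁻ x in O, ‖gu x‖ₑ ^ 2)), by finiteness,
    fun ε hε hε' => ?_⟩
  set T : Euc d → Euc d → Euc d := fun x z => contract x₀ c ε x - ε • z
  have hT : Measurable fun p : Euc d × Euc d => T p.1 p.2 := by
    simp only [T]
    unfold contract
    fun_prop
  have hwT : Measurable fun p : Euc d × Euc d => ‖w p.1 - w (T p.1 p.2)‖ₑ :=
    ((hwm.comp measurable_fst).sub (hwm.comp hT)).enorm
  have hI : Measurable fun x => ∫⁻ z in Metric.closedBall 0 1, ‖w x - w (T x z)‖ₑ :=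
    hwT.lintegral_prod_right'
  have q1 : ∫⁻ x in O, (∫⁻ z in Metric.closedBall 0 1, ‖w x - w (T x z)‖ₑ) ^ 2 ≤
      κ * (κ * (ENNReal.ofReal (3 * ε) ^ 2 * P)) := by
    calc ∫⁻ x in O, (∫⁻ z in Metric.closedBall 0 1, ‖w x - w (T x z)‖ₑ) ^ 2
        ≤ ∫⁻ x in O, κ * ∫⁻ z in Metric.closedBall 0 1, ‖w x - w (T x z)‖ₑ ^ 2 := by
          refine lintegral_mono fun x => ?_
          refine (sq_lintegral_le _ (hwT.comp measurable_prodMk_left).aemeasurable).trans ?_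
          rw [Measure.restrict_apply_univ]
          rfl
      _ = κ * ∫⁻ z in Metric.closedBall 0 1, ∫⁻ x in O, ‖w x - w (T x z)‖ₑ ^ 2 := by
          rw [lintegral_const_mul' _ _ hκ, lintegral_lintegral_swap]
          exact (hwT.pow_const 2).aemeasurable
      _ ≤ κ * ∫⁻ z in Metric.closedBall (0 : Euc d) 1, ENNReal.ofReal (3 * ε) ^ 2 * P := by
          gcongr 1
          refine setLIntegral_mono' measurableSet_closedBall fun z hz => ?_
          refine (lintegral_sub_sq_le hs (fun ε hε z => (hC ε hε z).1) hw hwl hε hε' hz).trans_eq ?_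
          rw [mul_assoc]
      _ = _ := by
          rw [setLIntegral_const]
          ring
  have q2 : ∫⁻ x in O, (∫⁻ z in Metric.closedBall 0 1, ‖O.indicator gu (T x z)‖ₑ) ^ 2 ≤
      κ ^ 2 * 2 ^ d * ∫⁻ x in O, ‖gu x‖ₑ ^ 2 := by
    rw [← lintegral_enorm_indicator_sq hO]
    exact (setLIntegral_le_lintegral _ _).trans (hs.lintegral_average_sq_le hε hε'
      (aemeasurable_enorm_indicator hO hu.2.1))
  calc ∫⁻ x in O, ‖w x • fderiv ℝ (smoothApprox O x₀ c f ε) x‖ₑ ^ 2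
      ≤ ∫⁻ x in O, 2 * (ENNReal.ofReal (C * ε⁻¹ * B) ^ 2 *
          (∫⁻ z in Metric.closedBall 0 1, ‖w x - w (T x z)‖ₑ) ^ 2 +
          ENNReal.ofReal C ^ 2 *
          (∫⁻ z in Metric.closedBall 0 1, ‖O.indicator gu (T x z)‖ₑ) ^ 2) := by
        refine setLIntegral_mono' hO fun x hx => ?_
        rw [← mul_pow, ← mul_pow]
        refine le_trans ?_ (add_sq_le_two_mul _ _)
        gcongr
        exact enorm_smul_fderiv_smoothApprox_le hs hB0 hC hf hB hu hul hε hε' hx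
    _ ≤ 2 * (ENNReal.ofReal (C * ε⁻¹ * B) ^ 2 * (κ * (κ * (ENNReal.ofReal (3 * ε) ^ 2 * P))) +
          ENNReal.ofReal C ^ 2 * (κ ^ 2 * 2 ^ d * ∫⁻ x in O, ‖gu x‖ₑ ^ 2)) := by
        rw [lintegral_const_mul' _ _ ENNReal.ofNat_ne_top,
          lintegral_add_left ((hI.pow_const 2).const_mul _),
          lintegral_const_mul' _ _ (ENNReal.pow_ne_top ENNReal.ofReal_ne_top),
          lintegral_const_mul' _ _ (ENNReal.pow_ne_top ENNReal.ofReal_ne_top)]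
        gcongr
    _ = _ := by
        have e : ENNReal.ofReal (3 * C * B) =
            ENNReal.ofReal (C * ε⁻¹ * B) * ENNReal.ofReal (3 * ε) := by
          rw [← ENNReal.ofReal_mul (by positivity)]
          congr 1
          field_simp
        rw [e]
        ring

end

theorem Submodule.mem_topologicalClosure_of_tendsto_inner {X : Type*} [NormedAddCommGroup X]
    [InnerProductSpace ℝ X] [CompleteSpace X] (S : Submodule ℝ X) {F : ℕ → X} {F' : X}
    (hF : ∀ n, F n ∈ S) {M : ℝ} (hM : ∀ n, ‖F n‖ ≤ M) {D : Set X}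
    (hD : ∀ x, (∀ y ∈ D, ⟪x, y⟫ = 0) → x = 0)
    (hlim : ∀ y ∈ D, Tendsto (fun n => ⟪F n, y⟫) atTop (𝓝 ⟪F', y⟫)) :
    F' ∈ S.topologicalClosure := by
  have hspan : ∀ y ∈ Submodule.span ℝ D, Tendsto (fun n => ⟪F n - F', y⟫) atTop (𝓝 0) := by
    intro y hy
    induction hy using Submodule.span_induction with
    | mem y hy =>
      simp_rw [inner_sub_left]
      simpa using (hlim y hy).sub_const ⟪F', y⟫
    | zero => simp
    | add y z _ _ h1 h2 =>
      simp_rw [inner_add_right]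
      simpa using h1.add h2
    | smul a y _ h =>
      simp_rw [real_inner_smul_right]
      simpa using h.const_mul a
  have hdense : (Submodule.span ℝ D).topologicalClosure = ⊤ := by
    rw [Submodule.topologicalClosure_eq_top_iff, Submodule.eq_bot_iff]
    intro x hx
    refine hD x fun y hy => ?_
    rw [real_inner_comm]
    exact (Submodule.mem_orthogonal _ _).1 hx y (Submodule.subset_span hy)
  have hM0 : 0 ≤ M := (norm_nonneg _).trans (hM 0)
  have hall : ∀ G, Tendsto (fun n => ⟪F n - F', G⟫) atTop (𝓝 0) := by
    intro G
    rw [Metric.tendsto_atTop]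
    intro ε hε
    have hG : G ∈ closure (Submodule.span ℝ D : Set X) := by
      rw [← Submodule.topologicalClosure_coe, hdense]
      trivial
    set L := M + ‖F'‖ + 1
    have hL : 0 < L := by positivity
    obtain ⟨G', hG', hd⟩ := Metric.mem_closure_iff.1 hG (ε / (2 * L)) (by positivity)
    obtain ⟨N, hN⟩ := Metric.tendsto_atTop.1 (hspan G' hG') (ε / 2) (by positivity)
    refine ⟨N, fun n hn => ?_⟩
    have h1 := hN n hn
    rw [dist_zero_right] at h1 ⊢
    have h2 : ⟪F n - F', G⟫ = ⟪F n - F', G - G'⟫ + ⟪F n - F', G'⟫ := by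
      rw [← inner_add_right, sub_add_cancel]
    have h3 : ‖⟪F n - F', G - G'⟫‖ ≤ L * (ε / (2 * L)) := by
      refine (norm_inner_le_norm _ _).trans ?_
      rw [dist_eq_norm] at hd
      refine mul_le_mul ?_ hd.le (norm_nonneg _) hL.le
      refine (norm_sub_le _ _).trans ?_
      linarith [hM n]
    have h4 : L * (ε / (2 * L)) = ε / 2 := by field_simp
    rw [h2]
    refine (norm_add_le _ _).trans_lt ?_
    linarith
  set P := S.topologicalClosure
  have : CompleteSpace P := S.isClosed_topologicalClosure.completeSpace_coe
  set G := F' - P.starProjection F'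
  have hG : G ∈ Pᗮ := P.sub_starProjection_mem_orthogonal F'
  have h0 : ∀ n, ⟪F n, G⟫ = 0 := fun n =>
    (Submodule.mem_orthogonal _ _).1 hG _ (S.le_topologicalClosure (hF n))
  have h1 : ⟪F', G⟫ = 0 := by
    have h2 := hall G
    simp_rw [inner_sub_left, h0, zero_sub] at h2
    exact neg_eq_zero.1 (tendsto_nhds_unique tendsto_const_nhds h2)
  have h2 : ⟪P.starProjection F', G⟫ = 0 :=
    (Submodule.mem_orthogonal _ _).1 hG _ (P.starProjection_apply_mem F')
  have h3 : G = 0 := by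
    rw [← inner_self_eq_zero (𝕜 := ℝ)]
    change ⟪F' - P.starProjection F', G⟫ = 0
    rw [inner_sub_left, h1, h2, sub_zero]
  rw [sub_eq_zero.1 h3]
  exact P.starProjection_apply_mem F'

theorem enorm_sq_eq_lintegral {α H : Type*} [MeasurableSpace α] {μ : Measure α}
    [NormedAddCommGroup H] (F : Lp H 2 μ) : ‖F‖ₑ ^ 2 = ∫⁻ x, ‖F x‖ₑ ^ 2 ∂μ := by
  have h := eLpNorm_nnreal_pow_eq_lintegral (f := F) (μ := μ) (p := 2) two_ne_zero
  rw [Lp.enorm_def]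
  simpa using h

theorem memLp_two_of_lintegral {α H : Type*} [MeasurableSpace α] {μ : Measure α}
    [NormedAddCommGroup H] {F : α → H} (hF : AEStronglyMeasurable F μ)
    (h : ∫⁻ x, ‖F x‖ₑ ^ 2 ∂μ ≠ ⊤) : MemLp F 2 μ := by
  refine ⟨hF, ?_⟩
  have h1 := eLpNorm_nnreal_pow_eq_lintegral (f := F) (μ := μ) (p := 2) two_ne_zero
  have h2 : eLpNorm F 2 μ ^ 2 = ∫⁻ x, ‖F x‖ₑ ^ 2 ∂μ := by simpa using h1
  rw [← h2] at h
  exact (ENNReal.pow_ne_top_iff.1 h).resolve_right two_ne_zero |>.lt_top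

theorem lintegral_ne_top_of_memLp_two {α H : Type*} [MeasurableSpace α] {μ : Measure α}
    [NormedAddCommGroup H] {F : α → H} (hF : MemLp F 2 μ) : ∫⁻ x, ‖F x‖ₑ ^ 2 ∂μ ≠ ⊤ := by
  have h1 := eLpNorm_nnreal_pow_eq_lintegral (f := F) (μ := μ) (p := 2) two_ne_zero
  have h2 : eLpNorm F 2 μ ^ 2 = ∫⁻ x, ‖F x‖ₑ ^ 2 ∂μ := by simpa using h1
  rw [← h2]
  exact ENNReal.pow_ne_top hF.2.ne

theorem _root_.MeasureTheory.MemLp.locallyIntegrableOn_two {O : Set (Euc d)} {H : Type*}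
    [NormedAddCommGroup H] {F : Euc d → H} (hF : MemLp F 2 (volume.restrict O)) (hO : IsOpen O) :
    LocallyIntegrableOn F O := by
  refine (locallyIntegrableOn_iff hO.isLocallyClosed).2 fun K hKO hK => ?_
  have : IsFiniteMeasure (volume.restrict K) := ⟨by simpa using hK.measure_lt_top⟩
  exact (hF.mono_measure (Measure.restrict_mono hKO le_rfl)).integrable one_le_two

/-- The pair `(f, g)`, multiplied by the weight `w`, as a function with values in `ℝ × ℝᵈ`. -/
noncomputable def weightedPair (w f : Euc d → ℝ) (g : Euc d → Euc d) (x : Euc d) :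
    WithLp 2 (ℝ × Euc d) :=
  w x • WithLp.toLp 2 (f x, g x)

theorem inner_weightedPair (w f : Euc d → ℝ) (g : Euc d → Euc d) (x : Euc d)
    (h : WithLp 2 (ℝ × Euc d)) :
    ⟪weightedPair w f g x, h⟫ = w x * (f x * h.fst + ⟪g x, h.snd⟫) := by
  rw [weightedPair, real_inner_smul_left, WithLp.prod_inner_apply]
  simp [mul_comm]

theorem enorm_weightedPair_sq (w f : Euc d → ℝ) (g : Euc d → Euc d) (x : Euc d) :
    ‖weightedPair w f g x‖ₑ ^ 2 = ‖w x * f x‖ₑ ^ 2 + ‖w x • g x‖ₑ ^ 2 := by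
  rw [← ofReal_norm, ← ofReal_norm, ← ofReal_norm, ← ENNReal.ofReal_pow (norm_nonneg _),
    ← ENNReal.ofReal_pow (norm_nonneg _), ← ENNReal.ofReal_pow (norm_nonneg _),
    ← ENNReal.ofReal_add (by positivity) (by positivity), weightedPair, norm_smul, mul_pow,
    WithLp.prod_norm_sq_eq_of_L2, norm_mul, norm_smul]
  congr 1
  simp only [WithLp.toLp_fst, WithLp.toLp_snd]
  ring

theorem aestronglyMeasurable_weightedPair {μ : Measure (Euc d)} {w f : Euc d → ℝ}
    {g : Euc d → Euc d} (hw : AEStronglyMeasurable w μ) (hf : AEStronglyMeasurable f μ)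
    (hg : AEStronglyMeasurable g μ) : AEStronglyMeasurable (weightedPair w f g) μ :=
  hw.smul ((WithLp.prod_continuous_toLp 2 ℝ (Euc d)).comp_aestronglyMeasurable (hf.prodMk hg))

theorem inner_gradient_eq_fderiv (ψ : Euc d → ℝ) (x v : Euc d) :
    ⟪gradient ψ x, v⟫ = fderiv ℝ ψ x v := by
  rw [gradient, InnerProductSpace.toDual_symm_apply]

theorem continuous_gradient {ψ : Euc d → ℝ} (hψ : ContDiff ℝ ∞ ψ) : Continuous (gradient ψ) :=
  (InnerProductSpace.toDual ℝ (Euc d)).symm.continuous.comp (hψ.continuous_fderiv (by simp))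

theorem enorm_gradient (ψ : Euc d → ℝ) (x : Euc d) : ‖gradient ψ x‖ₑ = ‖fderiv ℝ ψ x‖ₑ := by
  rw [← ofReal_norm, ← ofReal_norm, gradient, LinearIsometryEquiv.norm_map]

/-- The weighted pairs `(ψ, ∇ψ)` of finite norm, for smooth `ψ`. -/
noncomputable def smoothPairs (w : Euc d → ℝ) (μ : Measure (Euc d)) :
    Submodule ℝ (Lp (WithLp 2 (ℝ × Euc d)) 2 μ) where
  carrier := {F | ∃ ψ : Euc d → ℝ, ContDiff ℝ ∞ ψ ∧ F =ᵐ[μ] weightedPair w ψ (gradient ψ)}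
  zero_mem' := by
    refine ⟨0, contDiff_zero_fun, ?_⟩
    filter_upwards [Lp.coeFn_zero (WithLp 2 (ℝ × Euc d)) 2 μ] with x hx
    rw [hx]
    simp only [weightedPair, gradient, fderiv_zero, Pi.zero_apply, map_zero]
    exact (smul_zero (w x)).symm
  add_mem' := by
    rintro F G ⟨ψ, hψ, hF⟩ ⟨φ, hφ, hG⟩
    refine ⟨ψ + φ, hψ.add hφ, ?_⟩
    filter_upwards [Lp.coeFn_add F G, hF, hG] with x h1 h2 h3
    have e : gradient (ψ + φ) x = gradient ψ x + gradient φ x := by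
      simp only [gradient]
      rw [fderiv_add (hψ.differentiable (by simp) x) (hφ.differentiable (by simp) x), map_add]
    rw [h1, Pi.add_apply, h2, h3, weightedPair, weightedPair, weightedPair, ← smul_add, e]
    rfl
  smul_mem' := by
    rintro a F ⟨ψ, hψ, hF⟩
    refine ⟨a • ψ, contDiff_const.smul hψ, ?_⟩
    filter_upwards [Lp.coeFn_smul a F, hF] with x h1 h2
    have e : gradient (a • ψ) x = a • gradient ψ x := by
      simp only [gradient]
      rw [fderiv_const_smul (hψ.differentiable (by simp) x), map_smul]
    rw [h1, Pi.smul_apply, h2, weightedPair, weightedPair, smul_comm, e]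
    rfl

theorem exists_seq_of_mem_closure {O : Set (Euc d)} {w f : Euc d → ℝ} {gf : Euc d → Euc d}
    {F : Lp (WithLp 2 (ℝ × Euc d)) 2 (volume.restrict O)}
    (hF : F =ᵐ[volume.restrict O] weightedPair w f gf)
    (hc : F ∈ (smoothPairs w (volume.restrict O)).topologicalClosure) :
    ∃ ψ : ℕ → Euc d → ℝ, (∀ i, ContDiff ℝ ∞ (ψ i)) ∧
      Tendsto (fun i => ∫⁻ x in O, (‖w x * (f x - ψ i x)‖ₑ ^ 2 +
        ‖w x • (gf x - gradient (ψ i) x)‖ₑ ^ 2)) atTop (𝓝 0) := by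
  obtain ⟨G, hG, hlim⟩ := mem_closure_iff_seq_limit.1 hc
  choose ψ hψ hGψ using hG
  refine ⟨ψ, hψ, ?_⟩
  have h1 : Tendsto (fun i => ‖F - G i‖ₑ ^ 2) atTop (𝓝 0) := by
    have h2 : Tendsto (fun i => F - G i) atTop (𝓝 (F - F)) := hlim.const_sub F
    have := ((ENNReal.continuous_pow 2).tendsto _).comp h2.enorm
    simpa [Function.comp_def] using this
  refine h1.congr fun i => ?_
  rw [enorm_sq_eq_lintegral]
  refine lintegral_congr_ae ?_
  filter_upwards [Lp.coeFn_sub F (G i), hF, hGψ i] with x h1 h2 h3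
  rw [h1, Pi.sub_apply, h2, h3]
  refine Eq.trans ?_ (enorm_weightedPair_sq w (fun x => f x - ψ i x)
    (fun x => gf x - gradient (ψ i) x) x)
  congr 2
  rw [weightedPair, weightedPair, weightedPair, ← smul_sub]
  rfl

theorem integrableOn_mul_of_tsupport_subset {O : Set (Euc d)} (hO : IsOpen O) {g φ : Euc d → ℝ}
    (hg : LocallyIntegrableOn g O) (hφ : Continuous φ) (hφc : HasCompactSupport φ)
    (hφO : tsupport φ ⊆ O) : IntegrableOn (fun x => g x * φ x) O := by
  obtain ⟨C, hC⟩ := hφc.exists_bound_of_continuous hφ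
  refine IntegrableOn.of_forall_sdiff_eq_zero (s := tsupport φ) ?_ hO.measurableSet fun x hx => ?_
  · exact (hg.integrableOn_compact_subset hφO hφc).mul_bdd (c := C) hφ.aestronglyMeasurable
      (Eventually.of_forall hC)
  · rw [image_eq_zero_of_notMem_tsupport hx.2, mul_zero]

theorem _root_.MeasureTheory.LocallyIntegrableOn.inner_const {O : Set (Euc d)} {g : Euc d → Euc d}
    (hg : LocallyIntegrableOn g O) (v : Euc d) : LocallyIntegrableOn (fun x => ⟪g x, v⟫) O := by
  intro x hx
  obtain ⟨t, ht, hi⟩ := hg x hx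
  exact ⟨t, ht, Integrable.inner_const hi v⟩

theorem hasWeakGradOn_gradient (O : Set (Euc d)) {ψ : Euc d → ℝ}
    (hψ : ContDiff ℝ ∞ ψ) : HasWeakGradOn O ψ (gradient ψ) := by
  refine ⟨hψ.continuous.locallyIntegrable.locallyIntegrableOn O,
    (continuous_gradient hψ).locallyIntegrable.locallyIntegrableOn O, fun p hp hpc hpO v => ?_⟩
  rw [setIntegral_eq_integral_of_forall_compl_eq_zero fun x hx => ?_,
    setIntegral_eq_integral_of_forall_compl_eq_zero fun x hx => ?_,
    integral_mul_fderiv_eq_neg hψ hp hpc v]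
  · simp_rw [inner_gradient_eq_fderiv]
  · rw [image_eq_zero_of_notMem_tsupport fun h => hx (hpO h), mul_zero]
  · rw [image_eq_zero_of_notMem_tsupport fun h => hx (hpO (tsupport_fderiv_subset ℝ h)), zero_apply,
      mul_zero]

/-- The function whose integral against `f` is the pairing of `weightedPair w f gf` with `φ • h`,
after integration by parts. -/
noncomputable def pairingWeight (w : Euc d → ℝ) (gw : Euc d → Euc d) (φ : Euc d → ℝ)
    (h : WithLp 2 (ℝ × Euc d)) (x : Euc d) : ℝ :=
  w x * φ x * h.fst - ⟪gw x, h.snd⟫ * φ x - w x * fderiv ℝ φ x h.snd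

section

variable {O : Set (Euc d)} {w f φ : Euc d → ℝ} {gw gf : Euc d → Euc d}

theorem integrableOn_mul_fderiv (hO : IsOpen O) (hw : LocallyIntegrableOn w O)
    (hφ : ContDiff ℝ ∞ φ) (hφc : HasCompactSupport φ) (hφO : tsupport φ ⊆ O) (v : Euc d) :
    IntegrableOn (fun x => w x * fderiv ℝ φ x v) O :=
  integrableOn_mul_of_tsupport_subset hO hw
    ((hφ.continuous_fderiv (by simp)).clm_apply continuous_const) (hφc.fderiv_apply (𝕜 := ℝ) v)
    ((tsupport_fderiv_apply_subset ℝ v).trans hφO)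

theorem integrableOn_pairingWeight (hO : IsOpen O) (hw : HasWeakGradOn O w gw)
    (hφ : ContDiff ℝ ∞ φ) (hφc : HasCompactSupport φ) (hφO : tsupport φ ⊆ O)
    (h : WithLp 2 (ℝ × Euc d)) : IntegrableOn (pairingWeight w gw φ h) O := by
  have h1 := integrableOn_mul_of_tsupport_subset hO hw.1 hφ.continuous hφc hφO
  have h2 := integrableOn_mul_of_tsupport_subset hO (hw.2.1.inner_const h.snd) hφ.continuous hφc hφO
  exact ((h1.mul_const h.fst).sub h2).sub (integrableOn_mul_fderiv hO hw.1 hφ hφc hφO h.snd)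

theorem HasWeakGradOn.integral_inner_weightedPair (hO : IsOpen O) (hf : HasWeakGradOn O f gf)
    (hw : HasWeakGradOn O w gw) {B : ℝ} (hB : ∀ x, |f x| ≤ B)
    (hwf : LocallyIntegrableOn (fun x => w x • gf x) O)
    (hφ : ContDiff ℝ ∞ φ) (hφc : HasCompactSupport φ) (hφO : tsupport φ ⊆ O)
    (h : WithLp 2 (ℝ × Euc d)) :
    ∫ x in O, ⟪weightedPair w f gf x, φ x • h⟫ = ∫ x in O, f x * pairingWeight w gw φ h x := by
  have hu := hf.mul hO hw hB hwf
  have e := hu.2.2 φ hφ hφc hφO h.snd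
  have i1 := integrableOn_mul_fderiv hO hu.1 hφ hφc hφO h.snd
  have i2 := integrableOn_mul_of_tsupport_subset hO (hu.2.1.inner_const h.snd) hφ.continuous hφc hφO
  have i3 : IntegrableOn (fun x => f x * pairingWeight w gw φ h x) O :=
    Integrable.bdd_mul (c := B) (integrableOn_pairingWeight hO hw hφ hφc hφO h) hf.1.aestronglyMeasurable
      (Eventually.of_forall hB)
  have e' : ∀ x, ⟪weightedPair w f gf x, φ x • h⟫ = f x * pairingWeight w gw φ h x +
      (w x * f x * fderiv ℝ φ x h.snd + ⟪w x • gf x + f x • gw x, h.snd⟫ * φ x) := fun x => by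
    rw [real_inner_smul_right, inner_weightedPair, pairingWeight, inner_add_left,
      real_inner_smul_left, real_inner_smul_left]
    ring
  have i4 : IntegrableOn (fun x => w x * f x * fderiv ℝ φ x h.snd +
      ⟪w x • gf x + f x • gw x, h.snd⟫ * φ x) O := i1.add i2
  simp_rw [e']
  rw [integral_add i3 i4, integral_add i1 i2, e, neg_add_cancel, add_zero]

end

theorem eq_zero_of_inner_smul_eq_zero {O : Set (Euc d)} (hO : IsOpen O) {H : Type*}
    [NormedAddCommGroup H] [InnerProductSpace ℝ H] [CompleteSpace H]
    (F : Lp H 2 (volume.restrict O))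
    (hF : ∀ (y : Lp H 2 (volume.restrict O)) (φ : Euc d → ℝ) (h : H), ContDiff ℝ ∞ φ →
      HasCompactSupport φ → tsupport φ ⊆ O → y =ᵐ[volume.restrict O] (fun x => φ x • h) →
      ⟪F, y⟫ = 0) : F = 0 := by
  rw [Lp.eq_zero_iff_ae_eq_zero]
  refine (ae_restrict_iff' hO.measurableSet).2 ?_
  refine hO.ae_eq_zero_of_integral_contDiff_smul_eq_zero
    ((Lp.memLp F).locallyIntegrableOn_two hO) fun φ hφ hφc hφO => ?_
  rw [← setIntegral_eq_integral_of_forall_compl_eq_zero (s := O) fun x hx => by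
    rw [image_eq_zero_of_notMem_tsupport fun h => hx (hφO h), zero_smul]]
  by_cases hi : IntegrableOn (fun x => φ x • F x) O
  · refine ext_inner_left ℝ fun h => ?_
    rw [← integral_inner hi, inner_zero_right]
    have hm : MemLp (fun x => φ x • h) 2 (volume.restrict O) :=
      (hφ.continuous.smul continuous_const).memLp_of_hasCompactSupport hφc.smul_right
    rw [← hF (hm.toLp _) φ h hφ hφc hφO hm.coeFn_toLp, L2.inner_def]
    refine integral_congr_ae ?_
    filter_upwards [hm.coeFn_toLp] with x hx
    rw [hx, real_inner_smul_right, real_inner_smul_right, real_inner_comm]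
  · exact integral_undef hi

theorem lintegral_enorm_weightedPair_sq_le {μ : Measure (Euc d)} {w f : Euc d → ℝ}
    {g : Euc d → Euc d} {B : ℝ} (hw : AEStronglyMeasurable w μ) (hf : AEStronglyMeasurable f μ)
    (hB : ∀ x, |f x| ≤ B) :
    ∫⁻ x, ‖weightedPair w f g x‖ₑ ^ 2 ∂μ ≤
      ENNReal.ofReal B ^ 2 * ∫⁻ x, ‖w x‖ₑ ^ 2 ∂μ + ∫⁻ x, ‖w x • g x‖ₑ ^ 2 ∂μ := by
  simp_rw [enorm_weightedPair_sq]
  have hm : AEMeasurable (fun x => ‖w x * f x‖ₑ ^ 2) μ := (hw.mul hf).enorm.pow_const 2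
  rw [lintegral_add_left' hm,
    ← lintegral_const_mul' _ _ (ENNReal.pow_ne_top ENNReal.ofReal_ne_top)]
  gcongr with x
  rw [enorm_mul, mul_comm, mul_pow]
  gcongr
  rw [Real.enorm_eq_ofReal_abs]
  exact ENNReal.ofReal_le_ofReal (hB x)

section

variable {O : Set (Euc d)} {x₀ : Euc d} {c ε₀ : ℝ}

theorem mem_closure_smoothPairs_of_bounded (hs : Shrinkable O x₀ c ε₀) {w f : Euc d → ℝ}
    {gw gf : Euc d → Euc d} {B : ℝ} (hwm : Measurable w) (hw : HasWeakGradOn O w gw)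
    (hw2 : ∫⁻ x in O, ‖w x‖ₑ ^ 2 ≠ ⊤) (hgw : ∫⁻ x in O, ‖gw x‖ₑ ^ 2 ≠ ⊤)
    (hf : HasWeakGradOn O f gf) (hB : ∀ x, |f x| ≤ B)
    (hgf : ∫⁻ x in O, ‖w x • gf x‖ₑ ^ 2 ≠ ⊤) {F : Lp (WithLp 2 (ℝ × Euc d)) 2 (volume.restrict O)}
    (hF : F =ᵐ[volume.restrict O] weightedPair w f gf) :
    F ∈ (smoothPairs w (volume.restrict O)).topologicalClosure := by
  have hO := hs.isOpen
  have hOm := hO.measurableSet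
  have hB0 : 0 ≤ B := (abs_nonneg _).trans (hB 0)
  have hwm' : AEStronglyMeasurable w (volume.restrict O) := hwm.aestronglyMeasurable
  have hfm := hf.1.aestronglyMeasurable
  have hwL : MemLp w 2 (volume.restrict O) := memLp_two_of_lintegral hwm' hw2
  have hwfL : MemLp (fun x => w x * f x) 2 (volume.restrict O) :=
    hwL.of_le_mul (c := B) (hwm'.mul hfm) (Eventually.of_forall fun x => by
      rw [norm_mul, mul_comm]
      exact mul_le_mul_of_nonneg_right (hB x) (norm_nonneg _))
  have hwl : LocallyIntegrable (O.indicator w) :=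
    ((memLp_indicator_iff_restrict hOm).2 hwL).locallyIntegrable one_le_two
  have hul : LocallyIntegrable (O.indicator fun x => w x * f x) :=
    ((memLp_indicator_iff_restrict hOm).2 hwfL).locallyIntegrable one_le_two
  have hfL : MemLp f ⊤ (volume.restrict O) := memLp_top_of_bound hfm B (Eventually.of_forall hB)
  have hfl : LocallyIntegrable (O.indicator f) :=
    MemLp.locallyIntegrable (p := ⊤) ((memLp_indicator_iff_restrict hOm).2 hfL) le_top
  have hgfm : AEStronglyMeasurable (fun x => w x • gf x) (volume.restrict O) :=
    hwm'.smul hf.2.1.aestronglyMeasurable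
  have hgfL : MemLp (fun x => w x • gf x) 2 (volume.restrict O) := memLp_two_of_lintegral hgfm hgf
  have hfgwL : MemLp (fun x => f x • gw x) 2 (volume.restrict O) :=
    (memLp_two_of_lintegral hw.2.1.aestronglyMeasurable hgw).of_le_mul (c := B)
      (hfm.smul hw.2.1.aestronglyMeasurable) (Eventually.of_forall fun x => by
        rw [norm_smul]
        exact mul_le_mul_of_nonneg_right (hB x) (norm_nonneg _))
  have hgfl := hgfL.locallyIntegrableOn_two hO
  have hu := hf.mul hO hw hB hgfl
  have hgu : ∫⁻ x in O, ‖w x • gf x + f x • gw x‖ₑ ^ 2 ≠ ⊤ :=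
    lintegral_ne_top_of_memLp_two (hgfL.add hfgwL)
  obtain ⟨M, hM, hMle⟩ := exists_bound_lintegral_smul_fderiv hs hwm hB hfl hw hwl hu hul hgw hgu
  obtain ⟨ε, hε, hε', hεt⟩ := exists_seq_tendsto_pos hs.pos
  set ψ := fun n => smoothApprox O x₀ c f (ε n)
  have hψ : ∀ n, ContDiff ℝ ∞ (ψ n) := fun n => contDiff_smoothApprox hfl (hε n)
  have hψB : ∀ n x, |ψ n x| ≤ B := fun n x => by
    refine abs_mollify_le (fun y => ?_) (hε n) _
    by_cases hy : y ∈ O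
    · rw [indicator_of_mem hy]
      exact hB y
    · rw [indicator_of_notMem hy, abs_zero]
      exact hB0
  have hψlim : ∀ᵐ x ∂(volume.restrict O), Tendsto (fun n => ψ n x) atTop (𝓝 (f x)) :=
    (ae_restrict_iff' hOm).2 (hs.tendsto_mollify_contract hfl hεt)
  have hψg : ∀ n, ∫⁻ x in O, ‖w x • gradient (ψ n) x‖ₑ ^ 2 ≤ M := fun n => by
    simp_rw [enorm_smul, enorm_gradient, ← enorm_smul]
    exact hMle (ε n) (hε n) (hε' n)
  set R := ENNReal.ofReal B ^ 2 * (∫⁻ x in O, ‖w x‖ₑ ^ 2) + M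
  have hR : R ≠ ⊤ := by finiteness
  have hRle : ∀ n, ∫⁻ x in O, ‖weightedPair w (ψ n) (gradient (ψ n)) x‖ₑ ^ 2 ≤ R := fun n =>
    (lintegral_enorm_weightedPair_sq_le hwm' (hψ n).continuous.aestronglyMeasurable
      (hψB n)).trans (add_le_add_right (hψg n) _)
  have hψgm : ∀ n, AEStronglyMeasurable (gradient (ψ n)) (volume.restrict O) := fun n =>
    (continuous_gradient (hψ n)).aestronglyMeasurable
  have hFL : ∀ n, MemLp (weightedPair w (ψ n) (gradient (ψ n))) 2 (volume.restrict O) := fun n =>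
    memLp_two_of_lintegral (aestronglyMeasurable_weightedPair hwm'
      (hψ n).continuous.aestronglyMeasurable (hψgm n)) (ne_top_of_le_ne_top hR (hRle n))
  have hψl : ∀ n, LocallyIntegrableOn (fun x => w x • gradient (ψ n) x) O := fun n =>
    (memLp_two_of_lintegral (hwm'.smul (hψgm n))
      (ne_top_of_le_ne_top hM (hψg n))).locallyIntegrableOn_two hO
  refine Submodule.mem_topologicalClosure_of_tendsto_inner _ (F := fun n => (hFL n).toLp _)
    (M := √R.toReal) (D := {y | ∃ (φ : Euc d → ℝ) (h : WithLp 2 (ℝ × Euc d)), ContDiff ℝ ∞ φ ∧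
      HasCompactSupport φ ∧ tsupport φ ⊆ O ∧ y =ᵐ[volume.restrict O] fun x => φ x • h})
    (fun n => ⟨ψ n, hψ n, (hFL n).coeFn_toLp⟩) (fun n => ?_) (fun x hx => ?_) ?_
  · refine Real.le_sqrt_of_sq_le ?_
    rw [← toReal_enorm, ← ENNReal.toReal_pow, enorm_sq_eq_lintegral]
    refine ENNReal.toReal_mono hR ((lintegral_congr_ae ?_).trans_le (hRle n))
    filter_upwards [(hFL n).coeFn_toLp] with x hx
    rw [hx]
  · exact eq_zero_of_inner_smul_eq_zero hO x fun y φ h h1 h2 h3 h4 => hx y ⟨φ, h, h1, h2, h3, h4⟩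
  · rintro y ⟨φ, h, hφ, hφc, hφO, hy⟩
    have key : ∀ {G : Lp (WithLp 2 (ℝ × Euc d)) 2 (volume.restrict O)} {a : Euc d → ℝ}
        {b : Euc d → Euc d}, G =ᵐ[volume.restrict O] weightedPair w a b → HasWeakGradOn O a b →
        (∀ x, |a x| ≤ B) → LocallyIntegrableOn (fun x => w x • b x) O →
        ⟪G, y⟫ = ∫ x in O, a x * pairingWeight w gw φ h x := fun {G a b} hG hab haB hbl => by
      rw [L2.inner_def, ← hab.integral_inner_weightedPair hO hw haB hbl hφ hφc hφO h]
      refine integral_congr_ae ?_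
      filter_upwards [hG, hy] with x h1 h2
      rw [h1, h2]
    have hi := integrableOn_pairingWeight hO hw hφ hφc hφO h
    rw [key hF hf hB hgfl]
    refine (tendsto_integral_mul_of_bounded (fun n => (hψ n).continuous.aestronglyMeasurable) hψB
      hψlim (fun _ => hi) hi ?_).congr fun n => ?_
    · simp
    · exact (key (hFL n).coeFn_toLp (hasWeakGradOn_gradient O (hψ n)) (hψB n) (hψl n)).symm

end

theorem enorm_weightedPair_truncate_sub_le {w f : Euc d → ℝ} {g : Euc d → Euc d} {N : ℝ}
    (hN : 0 < N) (x : Euc d) :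
    ‖weightedPair w (fun x => truncate N (f x)) (fun x => deriv (truncate N) (f x) • g x) x -
      weightedPair w f g x‖ₑ ^ 2 ≤ ‖(2 : ℝ) • weightedPair w f g x‖ₑ ^ 2 := by
  have e1 : weightedPair w (fun x => truncate N (f x)) (fun x => deriv (truncate N) (f x) • g x) x -
      weightedPair w f g x = weightedPair w (fun x => truncate N (f x) - f x)
        (fun x => deriv (truncate N) (f x) • g x - g x) x := by
    rw [weightedPair, weightedPair, ← smul_sub]
    rfl
  have e2 : (2 : ℝ) • weightedPair w f g x =
      weightedPair w (fun x => 2 * f x) (fun x => (2 : ℝ) • g x) x := by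
    rw [weightedPair, smul_comm]
    rfl
  rw [e1, e2, enorm_weightedPair_sq, enorm_weightedPair_sq]
  gcongr ?_ ^ 2 + ?_ ^ 2
  · rw [enorm_le_iff_norm_le, norm_mul, norm_mul]
    gcongr
    refine (norm_sub_le _ _).trans ?_
    rw [norm_mul, Real.norm_ofNat, two_mul]
    gcongr
    exact abs_truncate_le_abs hN (f x)
  · rw [enorm_le_iff_norm_le, norm_smul, norm_smul]
    gcongr
    refine (norm_sub_le _ _).trans ?_
    rw [norm_smul, norm_smul, Real.norm_ofNat, two_mul]
    gcongr
    exact mul_le_of_le_one_left (norm_nonneg _) (abs_deriv_truncate_le hN (f x))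

theorem tendsto_weightedPair_truncate (w f : Euc d → ℝ) (g : Euc d → Euc d) (x : Euc d) :
    Tendsto (fun n : ℕ => weightedPair w (fun x => truncate ((n : ℝ) + 1) (f x))
      (fun x => deriv (truncate ((n : ℝ) + 1)) (f x) • g x) x) atTop
      (𝓝 (weightedPair w f g x)) := by
  have h1 := tendsto_truncate (f x)
  have h2 := (tendsto_deriv_truncate (f x)).smul_const (g x)
  rw [one_smul] at h2
  exact (((WithLp.prod_continuous_toLp 2 ℝ (Euc d)).tendsto _).comp
    (h1.prodMk_nhds h2)).const_smul (w x)

section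

variable {O : Set (Euc d)} {x₀ : Euc d} {c ε₀ : ℝ}

theorem mem_closure_smoothPairs (hs : Shrinkable O x₀ c ε₀) {w f : Euc d → ℝ}
    {gw gf : Euc d → Euc d} (hwm : Measurable w) (hw : HasWeakGradOn O w gw)
    (hw2 : ∫⁻ x in O, ‖w x‖ₑ ^ 2 ≠ ⊤) (hgw : ∫⁻ x in O, ‖gw x‖ₑ ^ 2 ≠ ⊤)
    (hf : HasWeakGradOn O f gf) {F : Lp (WithLp 2 (ℝ × Euc d)) 2 (volume.restrict O)}
    (hF : F =ᵐ[volume.restrict O] weightedPair w f gf) :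
    F ∈ (smoothPairs w (volume.restrict O)).topologicalClosure := by
  have hwm' : AEStronglyMeasurable w (volume.restrict O) := hwm.aestronglyMeasurable
  have hFL : MemLp (weightedPair w f gf) 2 (volume.restrict O) := (memLp_congr_ae hF).1 (Lp.memLp F)
  have hF2 : ∫⁻ x in O, ‖(2 : ℝ) • weightedPair w f gf x‖ₑ ^ 2 ≠ ⊤ :=
    lintegral_ne_top_of_memLp_two (hFL.const_smul (2 : ℝ))
  have hN : ∀ n : ℕ, (0 : ℝ) < n + 1 := fun n => n.cast_add_one_pos
  set a : ℕ → Euc d → ℝ := fun n x => truncate ((n : ℝ) + 1) (f x)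
  set b : ℕ → Euc d → Euc d := fun n x => deriv (truncate ((n : ℝ) + 1)) (f x) • gf x
  have hab : ∀ n, HasWeakGradOn O (a n) (b n) := fun n =>
    hf.comp_smooth hs.isOpen (contDiff_truncate _) (abs_truncate_le (hN n))
      (abs_deriv_truncate_le (hN n))
  have hm : ∀ n, AEStronglyMeasurable (weightedPair w (a n) (b n)) (volume.restrict O) := fun n =>
    aestronglyMeasurable_weightedPair hwm' (hab n).1.aestronglyMeasurable
      (hab n).2.1.aestronglyMeasurable
  have hle := fun n => enorm_weightedPair_truncate_sub_le (w := w) (f := f) (g := gf) (hN n)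
  have hL : ∀ n, MemLp (weightedPair w (a n) (b n)) 2 (volume.restrict O) := fun n => by
    have h := memLp_two_of_lintegral ((hm n).sub hFL.1)
      (ne_top_of_le_ne_top hF2 (lintegral_mono (hle n)))
    simpa using h.add hFL
  have hmem : ∀ n, (hL n).toLp _ ∈ (smoothPairs w (volume.restrict O)).topologicalClosure :=
    fun n => by
    refine mem_closure_smoothPairs_of_bounded hs hwm hw hw2 hgw (hab n)
      (fun x => abs_truncate_le (hN n) (f x)) ?_ (hL n).coeFn_toLp
    refine ne_top_of_le_ne_top (lintegral_ne_top_of_memLp_two (hL n)) (lintegral_mono fun x => ?_)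
    rw [enorm_weightedPair_sq]
    exact le_add_self
  refine (smoothPairs w (volume.restrict O)).isClosed_topologicalClosure.mem_of_tendsto
    (b := atTop) ?_ (Eventually.of_forall hmem)
  have hlim : Tendsto (fun n => ∫⁻ x in O, ‖weightedPair w (a n) (b n) x -
      weightedPair w f gf x‖ₑ ^ 2) atTop (𝓝 (∫⁻ _ in O, 0)) := by
    refine tendsto_lintegral_of_dominated_convergence' _
      (fun n => ((hm n).sub hFL.1).enorm.pow_const 2) (fun n => Eventually.of_forall (hle n)) hF2
      (Eventually.of_forall fun x => ?_)
    have h1 := (tendsto_weightedPair_truncate w f gf x).sub_const (weightedPair w f gf x)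
    rw [sub_self] at h1
    have h2 := ((ENNReal.continuous_pow 2).tendsto _).comp h1.enorm
    simpa [Function.comp_def] using h2
  rw [lintegral_zero] at hlim
  have hlim' := ((ENNReal.continuous_rpow_const (y := 1 / 2)).tendsto 0).comp hlim
  rw [ENNReal.zero_rpow_of_pos (by norm_num)] at hlim'
  rw [tendsto_iff_edist_tendsto_0]
  refine hlim'.congr fun n => ?_
  have e : ∫⁻ x in O, ‖weightedPair w (a n) (b n) x - weightedPair w f gf x‖ₑ ^ 2 =
      ‖(hL n).toLp _ - F‖ₑ ^ 2 := by
    rw [enorm_sq_eq_lintegral]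
    refine lintegral_congr_ae ?_
    filter_upwards [Lp.coeFn_sub ((hL n).toLp _) F, hF, (hL n).coeFn_toLp] with x h1 h2 h3
    rw [h1, Pi.sub_apply, h2, h3]
  rw [Function.comp_apply, e, edist_eq_enorm_sub, ← ENNReal.rpow_two, ← ENNReal.rpow_mul]
  norm_num

theorem exists_seq_contDiff_tendsto (hs : Shrinkable O x₀ c ε₀) {w f : Euc d → ℝ}
    {gw gf : Euc d → Euc d} (hwm : Measurable w) (hw : HasWeakGradOn O w gw)
    (hw2 : ∫⁻ x in O, ‖w x‖ₑ ^ 2 ≠ ⊤) (hgw : ∫⁻ x in O, ‖gw x‖ₑ ^ 2 ≠ ⊤)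
    (hf : HasWeakGradOn O f gf) (hwf : ∫⁻ x in O, ‖w x * f x‖ₑ ^ 2 ≠ ⊤)
    (hwgf : ∫⁻ x in O, ‖w x • gf x‖ₑ ^ 2 ≠ ⊤) :
    ∃ ψ : ℕ → Euc d → ℝ, (∀ i, ContDiff ℝ ∞ (ψ i)) ∧
      Tendsto (fun i => (∫⁻ x in O, ‖w x * (f x - ψ i x)‖ₑ ^ 2) +
        ∫⁻ x in O, ‖w x • (gf x - gradient (ψ i) x)‖ₑ ^ 2) atTop (𝓝 0) := by
  have hfm := hf.1.aestronglyMeasurable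
  have hwm' : AEStronglyMeasurable w (volume.restrict O) := hwm.aestronglyMeasurable
  have hL : MemLp (weightedPair w f gf) 2 (volume.restrict O) := by
    refine memLp_two_of_lintegral
      (aestronglyMeasurable_weightedPair hwm' hfm hf.2.1.aestronglyMeasurable) ?_
    have hm : AEMeasurable (fun x => ‖w x * f x‖ₑ ^ 2) (volume.restrict O) :=
      (hwm'.mul hfm).enorm.pow_const 2
    simp_rw [enorm_weightedPair_sq]
    rw [lintegral_add_left' hm]
    exact ENNReal.add_ne_top.2 ⟨hwf, hwgf⟩
  obtain ⟨ψ, hψ, hlim⟩ := exists_seq_of_mem_closure hL.coeFn_toLp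
    (mem_closure_smoothPairs hs hwm hw hw2 hgw hf hL.coeFn_toLp)
  refine ⟨ψ, hψ, hlim.congr fun i => ?_⟩
  have hm : AEMeasurable (fun x => ‖w x * (f x - ψ i x)‖ₑ ^ 2) (volume.restrict O) :=
    (hwm'.mul (hfm.sub (hψ i).continuous.aestronglyMeasurable)).enorm.pow_const 2
  exact lintegral_add_left' hm _

end

theorem enorm_sqrt_smul_sq {H : Type*} [NormedAddCommGroup H] [NormedSpace ℝ H] {t : ℝ}
    (ht : 0 ≤ t) (v : H) : ‖√t • v‖ₑ ^ 2 = ENNReal.ofReal (‖v‖ ^ 2 * t) := by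
  rw [← ofReal_norm, ← ENNReal.ofReal_pow (norm_nonneg _), norm_smul, mul_pow, Real.norm_eq_abs,
    sq_abs, Real.sq_sqrt ht, mul_comm]

theorem enorm_sqrt_mul_sq {t : ℝ} (ht : 0 ≤ t) (s : ℝ) :
    ‖√t * s‖ₑ ^ 2 = ENNReal.ofReal (s ^ 2 * t) := by
  rw [← smul_eq_mul, enorm_sqrt_smul_sq ht, Real.norm_eq_abs, sq_abs]

theorem exists_shrinkable {O : Set (Euc d)}
    (hO : O = univ ∨ ∃ (x₀ : Euc d) (r : ℝ), 0 < r ∧ O = Metric.ball x₀ r) :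
    ∃ x₀ c ε₀, Shrinkable O x₀ c ε₀ := by
  obtain rfl | ⟨x₀, r, hr, rfl⟩ := hO
  · exact ⟨_, _, _, shrinkable_univ⟩
  · exact ⟨_, _, _, shrinkable_ball x₀ hr⟩

/-- Lemma `le:spaces` of the paper: if `m ∈ W^{1,1}_loc(ℝᵈ)` and `√m ∈ W^{1,2}(O)`,
where `O` is `ℝᵈ` or an open ball, then every function of the weighted Sobolev class
`W^{1,2}(O, m dx)` can be approximated in the weighted norm by smooth functions,
i.e. `H^{1,2}(O, m dx) = W^{1,2}(O, m dx)`. -/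
theorem weighted_H12_eq_W12 (d : ℕ)
    (O : Set (EuclideanSpace ℝ (Fin d)))
    (hO : O = Set.univ ∨ ∃ (x₀ : EuclideanSpace ℝ (Fin d)) (r : ℝ), 0 < r ∧
      O = Metric.ball x₀ r)
    (m : EuclideanSpace ℝ (Fin d) → ℝ)
    (hm_meas : Measurable m) (hm_nonneg : ∀ x, 0 ≤ m x)
    (hmW11 : ∃ gm, HasWeakGrad m gm)
    (hsq : ∃ gs, HasWeakGradOn O (fun x => Real.sqrt (m x)) gs ∧
      IntegrableOn (fun x => (Real.sqrt (m x)) ^ 2) O volume ∧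
      IntegrableOn (fun x => ‖gs x‖ ^ 2) O volume) :
    ∀ (f : EuclideanSpace ℝ (Fin d) → ℝ)
      (gf : EuclideanSpace ℝ (Fin d) → EuclideanSpace ℝ (Fin d)),
      HasWeakGradOn O f gf →
      IntegrableOn (fun x => f x ^ 2 * m x) O volume →
      IntegrableOn (fun x => ‖gf x‖ ^ 2 * m x) O volume →
      ∃ ψ : ℕ → EuclideanSpace ℝ (Fin d) → ℝ,
        (∀ i, ContDiffOn ℝ (⊤ : ℕ∞) (ψ i) O) ∧
        Tendsto (fun i =>
          (∫⁻ x in O, ENNReal.ofReal ((f x - ψ i x) ^ 2 * m x)) +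
          ∫⁻ x in O, ENNReal.ofReal (‖gf x - gradient (ψ i) x‖ ^ 2 * m x))
          atTop (nhds 0) := by
  intro f gf hf hf2 hgf2
  obtain ⟨gs, hw, hw2, hgw⟩ := hsq
  obtain ⟨x₀, c, ε₀, hs⟩ := exists_shrinkable hO
  have hne : ∀ {q : EuclideanSpace ℝ (Fin d) → ℝ}, IntegrableOn q O →
      ∫⁻ x in O, ENNReal.ofReal (q x) ≠ ⊤ := fun hq => hq.lintegral_lt_top.ne
  have h1 : ∫⁻ x in O, ‖√(m x)‖ₑ ^ 2 ≠ ⊤ := by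
    simp_rw [Real.enorm_eq_ofReal (Real.sqrt_nonneg _), ← ENNReal.ofReal_pow (Real.sqrt_nonneg _)]
    exact hne hw2
  have h2 : ∫⁻ x in O, ‖gs x‖ₑ ^ 2 ≠ ⊤ := by
    simp_rw [← ofReal_norm, ← ENNReal.ofReal_pow (norm_nonneg _)]
    exact hne hgw
  have h3 : ∫⁻ x in O, ‖√(m x) * f x‖ₑ ^ 2 ≠ ⊤ := by
    simp_rw [enorm_sqrt_mul_sq (hm_nonneg _)]
    exact hne hf2
  have h4 : ∫⁻ x in O, ‖√(m x) • gf x‖ₑ ^ 2 ≠ ⊤ := by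
    simp_rw [enorm_sqrt_smul_sq (hm_nonneg _)]
    exact hne hgf2
  obtain ⟨ψ, hψ, hlim⟩ := exists_seq_contDiff_tendsto hs hm_meas.sqrt hw h1 h2 hf h3 h4
  refine ⟨ψ, fun i => (hψ i).contDiffOn, ?_⟩
  simp_rw [enorm_sqrt_mul_sq (hm_nonneg _), enorm_sqrt_smul_sq (hm_nonneg _)] at hlim
  exact hlim
end

section
/- Let n ∈ ℕ and let X = (X_s, s ∈ ℝ₊) be a continuous function from ℝ₊ to ℝⁿ. Suppose there exist a constant K ≥ 0 and locally integrable functions F : ℝ₊ → ℝⁿ and ρ : ℝ₊ → [0,∞) such that for every t > 0, every finite partition 0 = t₀ < t₁ < … < t_k, and all vectors λ₁, …, λ_k ∈ ℝⁿ, Σ_{j=1}^k λ_j·(X_{t∧t_j} − X_{t∧t_{j−1}}) ≤ ∫₀ᵗ λ(s)·F(s) ds + √(2K) ( ∫₀ᵗ |λ(s)|² ρ(s) ds )^{1/2}, where λ(s) = Σ_{j=1}^k λ_j 1_{[t_{j−1}, t_j)}(s). Then X is absolutely continuous with respect to Lebesgue measure on every compact interval of ℝ₊ (in particular X is a.e.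 differentiable with locally integrable derivative). -/
open MeasureTheory Filter Set Topology RealInnerProductSpace

/-- A finite set of nonnegative reals containing `0` is enumerated increasingly from `0`. -/
lemma exists_increasing_enumeration (S : Finset ℝ) (h0 : (0 : ℝ) ∈ S) (hS : ∀ x ∈ S, 0 ≤ x) :
    ∃ (k : ℕ) (τ : ℕ → ℝ), τ 0 = 0 ∧ (∀ j < k, τ j < τ (j + 1)) ∧ ∀ x ∈ S, ∃ p ≤ k, τ p = x := by
  have hpos : 0 < S.card := Finset.card_pos.2 ⟨0, h0⟩
  refine ⟨S.card - 1, fun j => if h : j < S.card then S.orderEmbOfFin rfl ⟨j, h⟩ else 0,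
    ?_, ?_, ?_⟩
  · simp only [hpos, dite_true]
    rw [Finset.orderEmbOfFin_zero rfl hpos]
    exact le_antisymm (Finset.min'_le _ _ h0) (hS _ (Finset.min'_mem _ _))
  · intro j hj
    have h1 : j < S.card := by omega
    have h2 : j + 1 < S.card := by omega
    simp only [h1, h2, dite_true]
    exact (S.orderEmbOfFin rfl).strictMono (by simp [Fin.lt_def])
  · intro x hx
    have : x ∈ Set.range (S.orderEmbOfFin rfl) := by
      rw [Finset.range_orderEmbOfFin]; exact hx
    obtain ⟨⟨p, hp⟩, rfl⟩ := this
    exact ⟨p, by omega, by simp [hp]⟩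

lemma sum_Ico_indicator_Ico {E : Type*} [AddCommMonoid E] {k : ℕ} {τ : ℕ → ℝ}
    (hτ : ∀ j < k, τ j < τ (j + 1)) {p q : ℕ} (hpq : p ≤ q) (hq : q ≤ k) (v : E) (s : ℝ) :
    τ p ≤ τ q ∧ ∑ j ∈ Finset.Ico p q, (Ico (τ j) (τ (j + 1))).indicator (fun _ => v) s
      = (Ico (τ p) (τ q)).indicator (fun _ => v) s := by
  induction q, hpq using Nat.le_induction with
  | base => simp
  | succ q hpq ih =>
    obtain ⟨hle, hsum⟩ := ih (by omega)
    have hlt := hτ q (by omega)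
    refine ⟨hle.trans hlt.le, ?_⟩
    rw [Finset.sum_Ico_succ_top hpq, hsum, ← Ico_union_Ico_eq_Ico hle hlt.le,
      Set.indicator_union_of_disjoint (by simp)]

lemma sum_range_sum_ite_mem_Ico {ι M : Type*} [AddCommMonoid M] (s : Finset ι) {k : ℕ}
    (p q : ι → ℕ) (hq : ∀ i ∈ s, q i ≤ k) (f : ι → ℕ → M) :
    ∑ j ∈ Finset.range k, ∑ i ∈ s, (if j ∈ Finset.Ico (p i) (q i) then f i j else 0)
      = ∑ i ∈ s, ∑ j ∈ Finset.Ico (p i) (q i), f i j := by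
  rw [Finset.sum_comm]
  refine Finset.sum_congr rfl fun i hi => ?_
  rw [← Finset.sum_filter]
  refine Finset.sum_congr ?_ fun _ _ => rfl
  ext j
  have := hq i hi
  simp only [Finset.mem_filter, Finset.mem_range, Finset.mem_Ico]
  omega

/-- An estimate for step functions along partitions starting at `0` extends to arbitrary finite
sums of indicators of intervals in `[0, T]`. -/
lemma step_estimate_of_partition_estimate {E : Type*} [NormedAddCommGroup E]
    [InnerProductSpace ℝ E] {X : ℝ → E} {T : ℝ} {Φ : (ℝ → E) → ℝ}
    (h : ∀ k : ℕ, ∀ τ : ℕ → ℝ, τ 0 = 0 → (∀ j < k, τ j < τ (j + 1)) → ∀ Λ : ℕ → E,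
      (∑ j ∈ Finset.range k, ⟪Λ j, X (min T (τ (j + 1))) - X (min T (τ j))⟫) ≤
        Φ (fun s => ∑ j ∈ Finset.range k, (Ico (τ j) (τ (j + 1))).indicator (fun _ => Λ j) s))
    {ι : Type*} (s : Finset ι) (a b : ι → ℝ) (ha : ∀ i ∈ s, 0 ≤ a i)
    (hab : ∀ i ∈ s, a i ≤ b i) (hb : ∀ i ∈ s, b i ≤ T) (v : ι → E) :
    ∑ i ∈ s, ⟪v i, X (b i) - X (a i)⟫ ≤
      Φ (fun r => ∑ i ∈ s, (Ico (a i) (b i)).indicator (fun _ => v i) r) := by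
  classical
  obtain ⟨k, τ, hτ0, hτ, hS⟩ := exists_increasing_enumeration
    (insert 0 (s.image a ∪ s.image b)) (by simp) (by
      intro x hx
      simp only [Finset.mem_insert, Finset.mem_union, Finset.mem_image] at hx
      rcases hx with rfl | ⟨i, hi, rfl⟩ | ⟨i, hi, rfl⟩
      · exact le_rfl
      · exact ha i hi
      · exact (ha i hi).trans (hab i hi))
  have hmono : ∀ i j, i ≤ j → j ≤ k → τ i ≤ τ j := fun i j hij hj =>
    (sum_Ico_indicator_Ico hτ hij hj (0 : ℝ) 0).1
  have hp : ∀ i, ∃ p, i ∈ s → p ≤ k ∧ τ p = a i := fun i => by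
    by_cases hi : i ∈ s
    · obtain ⟨p, h1, h2⟩ := hS (a i) (by
        simp only [Finset.mem_insert, Finset.mem_union, Finset.mem_image]
        exact Or.inr (Or.inl ⟨i, hi, rfl⟩))
      exact ⟨p, fun _ => ⟨h1, h2⟩⟩
    · exact ⟨0, fun h => absurd h hi⟩
  have hq : ∀ i, ∃ q, i ∈ s → q ≤ k ∧ τ q = b i := fun i => by
    by_cases hi : i ∈ s
    · obtain ⟨p, h1, h2⟩ := hS (b i) (by
        simp only [Finset.mem_insert, Finset.mem_union, Finset.mem_image]
        exact Or.inr (Or.inr ⟨i, hi, rfl⟩))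
      exact ⟨p, fun _ => ⟨h1, h2⟩⟩
    · exact ⟨0, fun h => absurd h hi⟩
  choose p hp using hp
  choose q' hq' using hq
  obtain ⟨q, hq, hpq⟩ : ∃ q : ι → ℕ, (∀ i ∈ s, q i ≤ k ∧ τ (q i) = b i) ∧ ∀ i, p i ≤ q i := by
    refine ⟨fun i => max (p i) (q' i), fun i hi => ?_, fun i => le_max_left _ _⟩
    obtain ⟨h1, h2⟩ := hp i hi
    obtain ⟨h3, h4⟩ := hq' i hi
    rcases le_total (p i) (q' i) with h5 | h5
    · simp [h5, h3, h4]
    · simp only [h5, max_eq_left]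
      refine ⟨h1, le_antisymm ?_ ?_⟩
      · rw [h2]; exact hab i hi
      · rw [← h4]; exact hmono _ _ h5 h1
  have key := h k τ hτ0 hτ
    (fun j => ∑ i ∈ s, if j ∈ Finset.Ico (p i) (q i) then v i else 0)
  convert key using 2
  · have hite : ∀ (P : Prop) [Decidable P] (x y : E),
        ⟪if P then x else 0, y⟫ = if P then ⟪x, y⟫ else 0 := fun P _ x y => by
      split_ifs <;> simp
    simp only [sum_inner, hite]
    rw [sum_range_sum_ite_mem_Ico s p q (fun i hi => (hq i hi).1)
      (fun i j => ⟪v i, X (min T (τ (j + 1))) - X (min T (τ j))⟫)]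
    refine Finset.sum_congr rfl fun i hi => ?_
    rw [← inner_sum, Finset.sum_Ico_sub (fun j => X (min T (τ j))) (hpq i), (hp i hi).2,
      (hq i hi).2, min_eq_right (hb i hi), min_eq_right ((hab i hi).trans (hb i hi))]
  · funext r
    have : ∀ j, (Ico (τ j) (τ (j + 1))).indicator
        (fun _ => ∑ i ∈ s, if j ∈ Finset.Ico (p i) (q i) then v i else 0) r =
        ∑ i ∈ s, if j ∈ Finset.Ico (p i) (q i) then
          (Ico (τ j) (τ (j + 1))).indicator (fun _ => v i) r else 0 := fun j => by
      by_cases hr : r ∈ Ico (τ j) (τ (j + 1)) <;> simp [hr]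
    simp only [this]
    rw [sum_range_sum_ite_mem_Ico s p q (fun i hi => (hq i hi).1)
      (fun i j => (Ico (τ j) (τ (j + 1))).indicator (fun _ => v i) r)]
    refine Finset.sum_congr rfl fun i hi => ?_
    rw [(sum_Ico_indicator_Ico hτ (hpq i) (hq i hi).1 (v i) r).2, (hp i hi).2, (hq i hi).2]

lemma norm_sq_sum_indicator_le {ι α E : Type*} [SeminormedAddCommGroup E] (s : Finset ι)
    {A : ι → Set α} (hA : (s : Set ι).PairwiseDisjoint A) {v : ι → E}
    (hv : ∀ i, ‖v i‖ ≤ 1) (r : α) :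
    ‖∑ i ∈ s, (A i).indicator (fun _ => v i) r‖ ^ 2
      ≤ ∑ i ∈ s, (A i).indicator (fun _ => (1 : ℝ)) r := by
  classical
  have hnn : ∀ i ∈ s, 0 ≤ (A i).indicator (fun _ => (1 : ℝ)) r := fun i _ =>
    Set.indicator_nonneg (fun _ _ => zero_le_one) _
  by_cases hr : ∃ i ∈ s, r ∈ A i
  · obtain ⟨i, hi, hri⟩ := hr
    have hother : ∀ j ∈ s, j ≠ i → (A j).indicator (fun _ => v j) r = 0 := fun j hj hji =>
      Set.indicator_of_notMem (fun hrj => Set.disjoint_left.1 (hA hj hi hji) hrj hri) _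
    rw [Finset.sum_eq_single_of_mem i hi hother]
    refine le_trans ?_ (Finset.single_le_sum hnn hi)
    simp only [hri, Set.indicator_of_mem]
    exact pow_le_one₀ (norm_nonneg _) (hv i)
  · push Not at hr
    rw [Finset.sum_eq_zero fun i hi => Set.indicator_of_notMem (hr i hi) _]
    simpa using Finset.sum_nonneg hnn

lemma dist_intervalIntegral_of_nonneg {f : ℝ → ℝ} (hf : LocallyIntegrable f volume)
    (hf0 : ∀ x, 0 ≤ f x) (a b : ℝ) :
    dist (∫ x in (0 : ℝ)..a, f x) (∫ x in (0 : ℝ)..b, f x)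
      = ∫ x in Ico (min a b) (max a b), f x := by
  have hi : ∀ u v : ℝ, IntervalIntegrable f volume u v := fun u v =>
    (hf.integrableOn_isCompact isCompact_uIcc).intervalIntegrable
  rw [dist_comm, Real.dist_eq, intervalIntegral.integral_interval_sub_left (hi _ _) (hi _ _),
    intervalIntegral.abs_intervalIntegral_eq, uIoc, integral_Ico_eq_integral_Ioo,
    ← integral_Ioc_eq_integral_Ioo, abs_of_nonneg (integral_nonneg hf0)]

lemma setIntegral_indicator_Ico {f : ℝ → ℝ} {a b T : ℝ} (ha : 0 ≤ a) (hb : b ≤ T) :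
    ∫ x in Icc (0 : ℝ) T, (Ico a b).indicator f x = ∫ x in Ico a b, f x := by
  rw [setIntegral_indicator measurableSet_Ico, Set.inter_eq_self_of_subset_right]
  exact fun x hx => ⟨ha.trans hx.1, hx.2.le.trans hb⟩

lemma absolutelyContinuousOnInterval_of_step_estimate {E : Type*} [NormedAddCommGroup E]
    [InnerProductSpace ℝ E] {X F : ℝ → E} {ρ : ℝ → ℝ} {T C : ℝ} (hT : 0 ≤ T) (hC : 0 ≤ C)
    (hF : LocallyIntegrable F volume) (hρ_nonneg : ∀ s, 0 ≤ ρ s)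
    (hρ : LocallyIntegrable ρ volume)
    (h : ∀ (s : Finset ℕ) (a b : ℕ → ℝ), (∀ i ∈ s, 0 ≤ a i) → (∀ i ∈ s, a i ≤ b i) →
      (∀ i ∈ s, b i ≤ T) → ∀ v : ℕ → E,
      ∑ i ∈ s, ⟪v i, X (b i) - X (a i)⟫ ≤
        (∫ r in Icc (0 : ℝ) T, ⟪∑ i ∈ s, (Ico (a i) (b i)).indicator (fun _ => v i) r, F r⟫) +
        C * √(∫ r in Icc (0 : ℝ) T,
          ‖∑ i ∈ s, (Ico (a i) (b i)).indicator (fun _ => v i) r‖ ^ 2 * ρ r)) :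
    AbsolutelyContinuousOnInterval X 0 T := by
  have hFn : LocallyIntegrable (fun x => ‖F x‖) volume := fun x => (hF x).norm
  have acF := ((hFn.integrableOn_isCompact
    (isCompact_uIcc (a := 0) (b := T))).intervalIntegrable).absolutelyContinuousOnInterval_intervalIntegral left_mem_uIcc
  have acρ := ((hρ.integrableOn_isCompact
    (isCompact_uIcc (a := 0) (b := T))).intervalIntegrable).absolutelyContinuousOnInterval_intervalIntegral left_mem_uIcc
  unfold AbsolutelyContinuousOnInterval at acF acρ ⊢
  have lim := acF.add ((acρ.sqrt).const_mul C)
  simp only [Real.sqrt_zero, mul_zero, add_zero] at lim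
  refine squeeze_zero' (Eventually.of_forall fun _ =>
    Finset.sum_nonneg fun _ _ => dist_nonneg) ?_ lim
  filter_upwards [show ∀ᶠ E in AbsolutelyContinuousOnInterval.totalLengthFilter ⊓
    𝓟 (AbsolutelyContinuousOnInterval.disjWithin 0 T),
    E ∈ AbsolutelyContinuousOnInterval.disjWithin 0 T from
    eventually_inf_principal.mpr (by simp)]
  rintro ⟨m, I⟩ hI
  obtain ⟨hmem, hdisj⟩ := hI
  simp only [uIcc_of_le hT] at hmem hdisj ⊢
  simp only [dist_intervalIntegral_of_nonneg hFn (fun _ => norm_nonneg _),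
    dist_intervalIntegral_of_nonneg hρ hρ_nonneg]
  set a : ℕ → ℝ := fun i => min (I i).1 (I i).2 with ha_def
  set b : ℕ → ℝ := fun i => max (I i).1 (I i).2 with hb_def
  have ha : ∀ i ∈ Finset.range m, 0 ≤ a i := fun i hi =>
    le_min (hmem i hi).1.1 (hmem i hi).2.1
  have hab : ∀ i ∈ Finset.range m, a i ≤ b i := fun i _ => min_le_max
  have hb : ∀ i ∈ Finset.range m, b i ≤ T := fun i hi =>
    max_le (hmem i hi).1.2 (hmem i hi).2.2
  have hdisj' : ((Finset.range m : Finset ℕ) : Set ℕ).PairwiseDisjoint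
      (fun i => Ico (a i) (b i)) := fun i hi j hj hij => by
    have := hdisj hi hj hij
    simp only [Function.onFun, uIoc, Ioc_disjoint_Ioc] at this
    simpa only [Function.onFun, Ico_disjoint_Ico] using this
  set v : ℕ → E := fun i => ‖X (b i) - X (a i)‖⁻¹ • (X (b i) - X (a i)) with hv_def
  have hv : ∀ i, ‖v i‖ ≤ 1 := fun i => by
    rw [hv_def, norm_smul, norm_inv, norm_norm]
    exact inv_mul_le_one
  have hvX : ∀ i, ⟪v i, X (b i) - X (a i)⟫ = dist (X (I i).1) (X (I i).2) := fun i => by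
    have h1 : ⟪v i, X (b i) - X (a i)⟫ = ‖X (b i) - X (a i)‖ := by
      simp only [hv_def, real_inner_smul_left, real_inner_self_eq_norm_sq]
      rcases eq_or_ne ‖X (b i) - X (a i)‖ 0 with h0 | h0
      · simp [h0]
      · field_simp
    rw [h1, ← dist_eq_norm]
    rcases le_total (I i).1 (I i).2 with h2 | h2
    · simp [a, b, h2, dist_comm]
    · simp [a, b, h2]
  have key := h (Finset.range m) a b ha hab hb v
  simp only [hvX] at key
  refine key.trans (add_le_add ?_ (mul_le_mul_of_nonneg_left (Real.sqrt_le_sqrt ?_) hC))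
  · have hint : ∀ i, IntegrableOn (fun r => (Ico (a i) (b i)).indicator (fun r => ‖F r‖) r)
        (Icc 0 T) volume := fun i =>
      (hFn.integrableOn_isCompact isCompact_Icc).indicator measurableSet_Ico
    rw [← Finset.sum_congr rfl fun i hi => setIntegral_indicator_Ico (ha i hi) (hb i hi),
      ← integral_finsetSum _ fun i _ => hint i]
    have hsum : ∀ r, ⟪∑ i ∈ Finset.range m, (Ico (a i) (b i)).indicator (fun _ => v i) r, F r⟫ =
        ∑ i ∈ Finset.range m, (Ico (a i) (b i)).indicator (fun r => ⟪v i, F r⟫) r := fun r => by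
      rw [sum_inner]
      refine Finset.sum_congr rfl fun i _ => ?_
      by_cases hr : r ∈ Ico (a i) (b i) <;> simp [hr]
    simp only [hsum]
    refine integral_mono (integrable_finsetSum _ fun i _ =>
      ((hF.integrableOn_isCompact isCompact_Icc).const_inner (v i)).indicator measurableSet_Ico)
      (integrable_finsetSum _ fun i _ => hint i) fun r => Finset.sum_le_sum fun i _ =>
        Set.indicator_le_indicator ?_
    exact (real_inner_le_norm _ _).trans (mul_le_of_le_one_left (norm_nonneg _) (hv i))
  · have hint : ∀ i, IntegrableOn (fun r => (Ico (a i) (b i)).indicator ρ r)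
        (Icc 0 T) volume := fun i =>
      (hρ.integrableOn_isCompact isCompact_Icc).indicator measurableSet_Ico
    rw [← Finset.sum_congr rfl fun i hi => setIntegral_indicator_Ico (ha i hi) (hb i hi),
      ← integral_finsetSum _ fun i _ => hint i]
    refine integral_mono_of_nonneg (Eventually.of_forall fun r =>
      mul_nonneg (sq_nonneg _) (hρ_nonneg r)) (integrable_finsetSum _ fun i _ => hint i)
      (Eventually.of_forall fun r => ?_)
    refine (mul_le_mul_of_nonneg_right (norm_sq_sum_indicator_le _ hdisj' hv r)
      (hρ_nonneg r)).trans_eq ?_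
    rw [Finset.sum_mul]
    refine Finset.sum_congr rfl fun i _ => ?_
    by_cases hr : r ∈ Ico (a i) (b i) <;> simp [hr]

/-- Lemma (part of `le:differ` of the paper): a continuous path `X` satisfying the
variational estimate against all piecewise-constant integrands is absolutely continuous
w.r.t. Lebesgue measure on compact intervals, i.e. it is the integral of a locally
integrable derivative. -/
theorem abs_continuous_of_variational_bound
    (n : ℕ) (X : ℝ → EuclideanSpace ℝ (Fin n)) (hX : Continuous X)
    (K : ℝ) (hK : 0 ≤ K)
    (F : ℝ → EuclideanSpace ℝ (Fin n)) (hF : LocallyIntegrable F volume)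
    (ρ : ℝ → ℝ) (hρ_nonneg : ∀ s, 0 ≤ ρ s) (hρ : LocallyIntegrable ρ volume)
    (hineq : ∀ t : ℝ, 0 < t → ∀ k : ℕ, ∀ τ : ℕ → ℝ, τ 0 = 0 →
      (∀ j < k, τ j < τ (j + 1)) →
      ∀ Λ : ℕ → EuclideanSpace ℝ (Fin n),
        (∑ j ∈ Finset.range k, ⟪Λ j, X (min t (τ (j + 1))) - X (min t (τ j))⟫) ≤
          (∫ s in Set.Icc (0 : ℝ) t,
            ⟪(∑ j ∈ Finset.range k,
              Set.indicator (Set.Ico (τ j) (τ (j + 1))) (fun _ => Λ j) s), F s⟫) +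
          Real.sqrt (2 * K) *
            Real.sqrt (∫ s in Set.Icc (0 : ℝ) t,
              ‖∑ j ∈ Finset.range k,
                Set.indicator (Set.Ico (τ j) (τ (j + 1))) (fun _ => Λ j) s‖ ^ 2 * ρ s)) :
    ∃ D : ℝ → EuclideanSpace ℝ (Fin n),
      (∀ T : ℝ, IntegrableOn D (Set.Icc 0 T) volume) ∧
      ∀ t : ℝ, 0 ≤ t → X t = X 0 + ∫ s in Set.Icc (0 : ℝ) t, D s := by
  have hac_pos : ∀ T, 0 < T → AbsolutelyContinuousOnInterval X 0 T := fun T hT =>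
    absolutelyContinuousOnInterval_of_step_estimate hT.le (Real.sqrt_nonneg (2 * K)) hF
      hρ_nonneg hρ fun s a b ha hab hb v =>
        step_estimate_of_partition_estimate (X := X)
          (Φ := fun L => (∫ r in Icc (0 : ℝ) T, ⟪L r, F r⟫) +
            √(2 * K) * √(∫ r in Icc (0 : ℝ) T, ‖L r‖ ^ 2 * ρ r))
          (hineq T hT) s a b ha hab hb v
  have hac : ∀ T, 0 ≤ T → AbsolutelyContinuousOnInterval X 0 T := fun T hT =>
    (hac_pos (T + 1) (by linarith)).mono (by
      rw [uIcc_of_le hT, uIcc_of_le (by linarith)]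
      exact Icc_subset_Icc_right (by linarith))
  have hacc : ∀ T, 0 ≤ T → ∀ c, AbsolutelyContinuousOnInterval (fun t => X t c) 0 T :=
    fun T hT c => squeeze_zero (fun _ => Finset.sum_nonneg fun _ _ => dist_nonneg)
      (fun _ => Finset.sum_le_sum fun _ _ => by
        simp only [dist_eq_norm, ← PiLp.sub_apply]
        exact PiLp.norm_apply_le _ _) (hac T hT)
  have hint : ∀ T, IntegrableOn
      (fun s => WithLp.toLp 2 fun c => deriv (fun t => X t c) s : ℝ → EuclideanSpace ℝ (Fin n))
      (Icc 0 T) volume := by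
    intro T
    rcases lt_or_ge T 0 with hT | hT
    · simp [hT]
    · refine Integrable.of_eval_piLp fun c => ?_
      have := (hacc T hT c).intervalIntegrable_deriv
      rw [intervalIntegrable_iff_integrableOn_Icc_of_le hT] at this
      exact this
  refine ⟨_, hint, fun t ht => ?_⟩
  ext c
  rw [PiLp.add_apply, eval_integral_piLp fun c => (hint t).eval_piLp c,
    integral_Icc_eq_integral_Ioc, ← intervalIntegral.integral_of_le ht]
  change _ = _ + ∫ s in (0 : ℝ)..t, deriv (fun t => X t c) s
  rw [(hacc t ht c).integral_deriv_eq_sub]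
  ring
end
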